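/- arXiv:1707.02916 — 2 statements merged into one kernel-verified Lean document; each statement's English description precedes it below -/
import Mathlib

section
/- Let k ≥ 3 and let H be a C_k-decomposable graph, where C_k is the cycle on k vertices (k even or odd). Then for every η > 0 there exists ρ > 0 and n₀ such that for every d ∈ (0,1] and every (ρ,d)-dense graph G with at least n₀ vertices, t_H(G) ≥ d^{|E(H)|} − η. -/
open MeasureTheory

/-- The homomorphism density `t_H(G)`. -/
noncomputable def homDensity {α β : Type*} [Fintype α] [Fintype β]
    (H : SimpleGraph α) (G : SimpleGraph β) : ℝ :=
  (Nat.card (H →g G) : ℝ) / (Fintype.card β : ℝ) ^ (Fintype.card α)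

/-- The number of edges of a graph. -/
noncomputable def edgeCount {α : Type*} (H : SimpleGraph α) : ℕ :=
  Nat.card H.edgeSet

/-- `G` is `(ρ,d)`-dense: every vertex subset `X` with `|X| ≥ ρ|V(G)|`
spans at least `(d/2)|X|²` edges. -/
def LocallyDense {β : Type*} [Fintype β] (G : SimpleGraph β) (ρ d : ℝ) : Prop :=
  ∀ X : Finset β, ρ * (Fintype.card β : ℝ) ≤ (X.card : ℝ) →
    d / 2 * (X.card : ℝ) ^ 2 ≤
      (Nat.card {e : Sym2 β // e ∈ G.edgeSet ∧ ∀ v ∈ e, v ∈ X} : ℝ)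

/-- `(bag, T)` is a tree decomposition of `H`. -/
def IsTreeDecomp {α ι : Type*} [DecidableEq α] (H : SimpleGraph α) (bag : ι → Finset α)
    (T : SimpleGraph ι) : Prop :=
  T.IsTree ∧
  (∀ v : α, ∃ X, v ∈ bag X) ∧
  (∀ u v : α, H.Adj u v → ∃ X, u ∈ bag X ∧ v ∈ bag X) ∧
  (∀ X Y Z : ι, ∀ p : T.Walk X Y, p.IsPath → Z ∈ p.support →
    bag X ∩ bag Y ⊆ bag Z)

/-- `(bag, T)` is a `J`-decomposition of `H`: a tree decomposition in which every
bag induces a copy of `J`, and for adjacent bags there is an isomorphism between the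
induced copies of `J` fixing the intersection pointwise. -/
def IsJDecomp {α ι γ : Type*} [DecidableEq α] (H : SimpleGraph α) (J : SimpleGraph γ)
    (bag : ι → Finset α) (T : SimpleGraph ι) : Prop :=
  IsTreeDecomp H bag T ∧
  (∀ X : ι, Nonempty (H.induce ↑(bag X) ≃g J)) ∧
  (∀ X Y : ι, T.Adj X Y → ∃ e : H.induce ↑(bag X) ≃g H.induce ↑(bag Y),
      ∀ (v : α) (h1 : v ∈ bag X) (h2 : v ∈ bag Y),
        ((e ⟨v, h1⟩ : ↑(bag Y)) : α) = v)

/-- `H` is `J`-decomposable. -/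
def JDecomposable {α γ : Type*} [DecidableEq α] (H : SimpleGraph α) (J : SimpleGraph γ) : Prop :=
  ∃ (ι : Type) (_ : Fintype ι) (bag : ι → Finset α) (T : SimpleGraph ι),
    IsJDecomp H J bag T

/-!
Give each bag the uniform distribution on its homomorphisms to `G`, and glue these along the tree,
making adjacent bags conditionally independent given their intersection; the isomorphisms fixing
the intersections make the marginals agree. Gluing a bag `Y` onto the part `U` already built adds
at least `log t_J(G) - log t_{J[S]}(G)` to the entropy, where `S` is the copy of `U ∩ Y` in `J`. So
if passing from `J[S]` to `J` costs at most a factor `δ` per edge, the final entropy is at least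
`e(H) log δ`, and it is at most `log t_H(G)`.

For `J = C_k` a proper induced subgraph `J[S]` is a disjoint union of paths. Path densities are
moments of a probability measure, the spectral measure of the adjacency matrix at the constant
function, so a path with `j` edges has density at most `b ^ j`, where `b ^ M` is the density of the
path with `M` edges and `M` is the largest even number `≤ k`. By Cauchy–Schwarz the closed walks of
length `M` have density at least `b ^ M`, and for odd `k` local density supplies the last edge at
the cost of a factor `δ = d - ε`. For `d ≤ ε = η / e(H)` the bound is trivial.
-/

open Finset
open scoped BigOperators

section ProductAverage

variable {α M : Type*} {Ω : α → Type*} [Fintype α] [DecidableEq α] [∀ i, Fintype (Ω i)]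
  [AddCommMonoid M] [Module ℚ≥0 M]

/-- The conditional expectation of `f` given the coordinates in `X`, for the uniform distribution
on a finite product. -/
noncomputable def condAverage (X : Finset α) (f : (∀ i, Ω i) → M) (φ : ∀ i, Ω i) : M :=
  𝔼 ψ, f (X.piecewise φ ψ)

theorem dependsOn_condAverage (X : Finset α) (f : (∀ i, Ω i) → M) :
    DependsOn (condAverage X f) X := fun _ _ h =>
  expect_congr rfl fun _ _ => congrArg f (X.piecewise_congr h fun _ _ => rfl)

theorem expect_condAverage (X : Finset α) (f : (∀ i, Ω i) → M) :
    𝔼 φ, condAverage X f φ = 𝔼 φ, f φ := by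
  have swap : Function.Involutive fun p : (∀ i, Ω i) × (∀ i, Ω i) =>
      (X.piecewise p.1 p.2, X.piecewise p.2 p.1) := by
    rintro ⟨φ, ψ⟩
    ext i <;> by_cases hi : i ∈ X <;> simp [hi]
  calc 𝔼 φ, condAverage X f φ
      = 𝔼 p : (∀ i, Ω i) × (∀ i, Ω i), f (X.piecewise p.1 p.2) := by
        rw [← univ_product_univ, expect_product]; rfl
    _ = 𝔼 p : (∀ i, Ω i) × (∀ i, Ω i), f p.1 :=
        Fintype.expect_equiv swap.toPerm _ _ fun _ => rfl
    _ = 𝔼 φ, f φ := by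
        rw [← univ_product_univ, expect_product]
        exact expect_congr rfl fun φ _ => expect_const ⟨φ, mem_univ _⟩ (f φ)

theorem condAverage_condAverage {X Y : Finset α} (hXY : X ⊆ Y) (f : (∀ i, Ω i) → M) :
    condAverage X (condAverage Y f) = condAverage X f := by
  funext φ
  simp only [condAverage]
  rw [← expect_condAverage Y fun ψ => f (X.piecewise φ ψ)]
  refine expect_congr rfl fun ψ _ => expect_congr rfl fun χ _ => congrArg f ?_
  funext i
  by_cases hX : i ∈ X
  · simp [hX, hXY hX]
  · by_cases hY : i ∈ Y <;> simp [hX, hY]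

theorem condAverage_eq_condAverage_inter {U X : Finset α} {f : (∀ i, Ω i) → M}
    (hf : DependsOn f (X : Set α)) : condAverage U f = condAverage (U ∩ X) f := by
  funext φ
  refine expect_congr rfl fun ψ _ => hf fun i hi => ?_
  by_cases hU : i ∈ U <;> simp_all

theorem condAverage_eq_self {X : Finset α} {f : (∀ i, Ω i) → M}
    (hf : DependsOn f (X : Set α)) : condAverage X f = f := by
  funext φ
  calc 𝔼 ψ, f (X.piecewise φ ψ) = 𝔼 _ψ : ∀ i, Ω i, f φ :=
        expect_congr rfl fun ψ _ => hf fun i hi => piecewise_eq_of_mem _ _ _ hi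
    _ = f φ := expect_const ⟨φ, mem_univ _⟩ _

theorem condAverage_mul_of_dependsOn {X : Finset α} (f : (∀ i, Ω i) → ℝ) {h : (∀ i, Ω i) → ℝ}
    (hh : DependsOn h (X : Set α)) : condAverage X (f * h) = condAverage X f * h := by
  funext φ
  simp only [condAverage, Pi.mul_apply, expect_mul]
  refine expect_congr rfl fun ψ _ => ?_
  rw [hh fun i hi => piecewise_eq_of_mem _ _ _ hi]

theorem expect_mul_of_dependsOn {X : Finset α} (f : (∀ i, Ω i) → ℝ) {h : (∀ i, Ω i) → ℝ}
    (hh : DependsOn h (X : Set α)) : 𝔼 φ, f φ * h φ = 𝔼 φ, condAverage X f φ * h φ := by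
  rw [← expect_condAverage X]
  exact expect_congr rfl fun φ _ => congrFun (condAverage_mul_of_dependsOn f hh) φ

theorem condAverage_nonneg (X : Finset α) {f : (∀ i, Ω i) → ℝ} (hf : 0 ≤ f) :
    0 ≤ condAverage X f := fun _ => expect_nonneg fun _ _ => hf _

theorem eq_zero_of_condAverage_eq_zero {X : Finset α} {f : (∀ i, Ω i) → ℝ} (hf : 0 ≤ f)
    {φ : ∀ i, Ω i} (h : condAverage X f φ = 0) : f φ = 0 := by
  have := (expect_eq_zero_iff_of_nonneg fun ψ _ => hf (X.piecewise φ ψ)).1 h φ (mem_univ _)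
  rwa [show X.piecewise φ φ = φ from funext fun i => ite_self (φ i)] at this

theorem condAverage_comp_perm {α β M : Type*} [Fintype α] [DecidableEq α] [Fintype β]
    [AddCommMonoid M] [Module ℚ≥0 M] {S : Finset α} {σ : Equiv.Perm α} (hσ : ∀ i ∈ S, σ i = i)
    (f : (α → β) → M) : condAverage S (fun φ => f (φ ∘ σ)) = condAverage S f := by
  funext φ
  refine Fintype.expect_equiv (σ.symm.arrowCongr (Equiv.refl β)) _ _ fun ψ => congrArg f ?_
  have hmem : ∀ i, σ i ∈ S ↔ i ∈ S := fun i =>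
    ⟨fun hi => σ.injective (hσ _ hi) ▸ hi, fun hi => (hσ i hi).symm ▸ hi⟩
  funext i
  by_cases hi : i ∈ S
  · simp [hi, hσ i hi]
  · simp [hi, hmem]

theorem expect_comp_of_injective {α β κ M : Type*} [Fintype α] [DecidableEq α] [Fintype β]
    [Nonempty β] [Fintype κ] [DecidableEq κ] [AddCommMonoid M] [Module ℚ≥0 M]
    {s : κ → α} (hs : Function.Injective s) (F : (κ → β) → M) :
    𝔼 φ : α → β, F (φ ∘ s) = 𝔼 θ, F θ := by
  have swap : Function.Involutive fun p : (α → β) × (κ → β) =>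
      (Function.extend s p.2 p.1, p.1 ∘ s) := by
    rintro ⟨φ, θ⟩
    refine Prod.ext (funext fun x => ?_) (funext fun i => by simp [hs.extend_apply])
    by_cases hx : ∃ i, s i = x
    · obtain ⟨i, rfl⟩ := hx
      simp [hs.extend_apply]
    · simp [Function.extend_apply' _ _ _ hx]
  calc 𝔼 φ : α → β, F (φ ∘ s) = 𝔼 p : (α → β) × (κ → β), F (p.1 ∘ s) := by
        rw [← univ_product_univ, expect_product]
        exact expect_congr rfl fun φ _ => (expect_const univ_nonempty (F (φ ∘ s))).symm
    _ = 𝔼 p : (α → β) × (κ → β), F p.2 := Fintype.expect_equiv swap.toPerm _ _ fun _ => rfl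
    _ = 𝔼 θ, F θ := by
        rw [← univ_product_univ, expect_product]
        exact expect_const univ_nonempty (𝔼 θ, F θ)

end ProductAverage

section Entropy

/-- The entropy of a density `q` with respect to the uniform distribution on a finite type. It is
nonpositive, and `0` for the uniform distribution itself. -/
noncomputable def entropy {Ω : Type*} [Fintype Ω] (q : Ω → ℝ) : ℝ := 𝔼 ω, (q ω).negMulLog

/-- The density, with respect to the uniform distribution on a finite type, of the uniform
distribution on `A`. It is `0` when `A` is empty. -/
noncomputable def uniformDensity {Ω : Type*} [Fintype Ω] (A : Finset Ω) (ω : Ω) : ℝ :=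
  (A : Set Ω).indicator 1 ω * (A.dens : ℝ)⁻¹

variable {Ω : Type*} [Fintype Ω] {A : Finset Ω} {q : Ω → ℝ}

theorem uniformDensity_nonneg (A : Finset Ω) : 0 ≤ uniformDensity A := fun _ =>
  mul_nonneg (Set.indicator_nonneg (fun _ _ => zero_le_one) _) (by positivity)

theorem uniformDensity_of_notMem {ω : Ω} (hω : ω ∉ A) : uniformDensity A ω = 0 := by
  simp [uniformDensity, hω]

theorem expect_uniformDensity (hA : A.Nonempty) : 𝔼 ω, uniformDensity A ω = 1 := by
  have hdens : (A.dens : ℝ) ≠ 0 := by simpa using hA.ne_empty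
  simp only [uniformDensity, ← expect_mul, expect_indicator_one, mul_inv_cancel₀ hdens]

theorem entropy_uniformDensity (hA : A.Nonempty) :
    entropy (uniformDensity A) = Real.log A.dens := by
  have hterm : ∀ ω, (uniformDensity A ω).negMulLog = uniformDensity A ω * Real.log A.dens := by
    intro ω
    by_cases hω : ω ∈ A
    · simp [uniformDensity, hω, Real.negMulLog]
    · simp [uniformDensity_of_notMem hω]
  simp only [entropy, hterm, ← expect_mul, expect_uniformDensity hA, one_mul]

theorem exp_entropy_le_dens (hq : 0 ≤ q) (hq1 : 𝔼 ω, q ω = 1) (hqA : ∀ ω ∉ A, q ω = 0) :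
    Real.exp (entropy q) ≤ A.dens := by
  have hA : A.Nonempty := by
    rw [nonempty_iff_ne_empty]
    rintro rfl
    have hq0 : q = 0 := funext fun ω => hqA ω (notMem_empty ω)
    simp [hq0] at hq1
  set τ : ℝ := (A.dens : ℝ) with hτ
  have hτ0 : 0 < τ := by simpa [τ] using hA
  have hterm : ∀ ω, (q ω).negMulLog ≤ q ω * Real.log τ + (uniformDensity A ω - q ω) := by
    intro ω
    by_cases hω : ω ∈ A
    · have hle := mul_le_mul_of_nonneg_right
        (Real.negMulLog_le_one_sub_self (mul_nonneg (hq ω) hτ0.le)) (inv_nonneg.2 hτ0.le)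
      have hlhs : (q ω * τ).negMulLog * τ⁻¹ = (q ω).negMulLog - q ω * Real.log τ := by
        rw [Real.negMulLog_mul]
        simp only [Real.negMulLog]
        field_simp
        ring
      have hrhs : (1 - q ω * τ) * τ⁻¹ = uniformDensity A ω - q ω := by
        simp only [uniformDensity, ← hτ, Set.indicator_of_mem (mem_coe.2 hω), Pi.one_apply]
        field_simp
      linarith
    · simp [hqA ω hω, uniformDensity_of_notMem hω]
  rw [← Real.le_log_iff_exp_le hτ0]
  calc entropy q ≤ 𝔼 ω, (q ω * Real.log τ + (uniformDensity A ω - q ω)) :=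
        expect_le_expect fun ω _ => hterm ω
    _ = Real.log τ := by
        rw [expect_add_distrib, ← expect_mul, expect_sub_distrib, hq1, expect_uniformDensity hA]
        ring

theorem entropy_le_log_dens (hq : 0 ≤ q) (hq1 : 𝔼 ω, q ω = 1) (hqA : ∀ ω ∉ A, q ω = 0) :
    entropy q ≤ Real.log A.dens :=
  have hle := exp_entropy_le_dens hq hq1 hqA
  (Real.le_log_iff_exp_le ((Real.exp_pos _).trans_le hle)).2 hle

end Entropy

section MarkovGluing

variable {α : Type*} {Ω : α → Type*} [Fintype α] [DecidableEq α] [∀ i, Fintype (Ω i)]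
  {U Y : Finset α} {q p : (∀ i, Ω i) → ℝ}

/-- The density in which, given the coordinates in `U ∩ Y`, the remaining coordinates in `U` and
in `Y` are independent, distributed as under `q` and under `p`. Where the common marginal vanishes
so do `q` and `p`, and the convention `x / 0 = 0` gives the right value. -/
noncomputable def markovGlue (U Y : Finset α) (q p : (∀ i, Ω i) → ℝ) (φ : ∀ i, Ω i) : ℝ :=
  q φ * (p φ / condAverage (U ∩ Y) p φ)

theorem markovGlue_nonneg (hq : 0 ≤ q) (hp : 0 ≤ p) : 0 ≤ markovGlue U Y q p := fun φ =>
  mul_nonneg (hq φ) (div_nonneg (hp φ) (condAverage_nonneg _ hp φ))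

theorem markovGlue_comm (h : condAverage (U ∩ Y) q = condAverage (U ∩ Y) p) :
    markovGlue U Y q p = markovGlue Y U p q := by
  funext φ
  simp only [markovGlue, inter_comm Y U, h]
  ring

theorem dependsOn_markovGlue (hq : DependsOn q (U : Set α)) (hp : DependsOn p (Y : Set α)) :
    DependsOn (markovGlue U Y q p) (U ∪ Y : Finset α) := by
  rw [coe_union]
  intro φ ψ h
  have hg := (dependsOn_condAverage (U ∩ Y) p).mono (by simp : (↑(U ∩ Y) : Set α) ⊆ U)
  simp only [markovGlue, hq fun i hi => h i (Or.inl hi), hp fun i hi => h i (Or.inr hi),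
    hg fun i hi => h i (Or.inl hi)]

theorem condAverage_left_markovGlue (hq : 0 ≤ q) (hqU : DependsOn q (U : Set α))
    (hpY : DependsOn p (Y : Set α)) (h : condAverage (U ∩ Y) q = condAverage (U ∩ Y) p) :
    condAverage U (markovGlue U Y q p) = q := by
  set g := condAverage (U ∩ Y) p with hg
  have hgU : DependsOn g (U : Set α) := (dependsOn_condAverage _ p).mono (by simp)
  have hquot : DependsOn (q / g) (U : Set α) := fun φ ψ hφ => by
    rw [Pi.div_apply, Pi.div_apply, hqU hφ, hgU hφ]
  have hprod : markovGlue U Y q p = p * (q / g) := by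
    funext φ
    simp only [markovGlue, Pi.mul_apply, Pi.div_apply, ← hg]
    ring
  rw [hprod, condAverage_mul_of_dependsOn p hquot, condAverage_eq_condAverage_inter hpY, ← hg]
  funext φ
  refine mul_div_cancel_of_imp' fun hφ => ?_
  exact eq_zero_of_condAverage_eq_zero hq ((congrFun h φ).trans hφ)

theorem condAverage_right_markovGlue (hp : 0 ≤ p) (hqU : DependsOn q (U : Set α))
    (hpY : DependsOn p (Y : Set α)) (h : condAverage (U ∩ Y) q = condAverage (U ∩ Y) p) :
    condAverage Y (markovGlue U Y q p) = p := by
  rw [markovGlue_comm h]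
  exact condAverage_left_markovGlue hp hpY hqU (by rw [inter_comm, h])

theorem entropy_markovGlue (hq : 0 ≤ q) (hp : 0 ≤ p) (hqU : DependsOn q (U : Set α))
    (hpY : DependsOn p (Y : Set α)) (h : condAverage (U ∩ Y) q = condAverage (U ∩ Y) p) :
    entropy (markovGlue U Y q p) =
      entropy q + entropy p - entropy (condAverage (U ∩ Y) p) := by
  set g := condAverage (U ∩ Y) p with hg
  set r := markovGlue U Y q p with hr
  have hrU : condAverage U r = q := condAverage_left_markovGlue hq hqU hpY h
  have hrY : condAverage Y r = p := condAverage_right_markovGlue hp hqU hpY h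
  have hrg : condAverage (U ∩ Y) r = g := by
    rw [← condAverage_condAverage (inter_subset_right : U ∩ Y ⊆ Y), hrY]
  have hlog : ∀ φ, (r φ).negMulLog =
      r φ * -Real.log (q φ) + r φ * -Real.log (p φ) - r φ * -Real.log (g φ) := by
    intro φ
    by_cases hφ : r φ = 0
    · simp [hφ]
    · simp only [hr, markovGlue, ← hg] at hφ ⊢
      have hq0 : q φ ≠ 0 := left_ne_zero_of_mul hφ
      have hpg := div_ne_zero_iff.1 (right_ne_zero_of_mul hφ)
      rw [Real.negMulLog, Real.log_mul hq0 (div_ne_zero hpg.1 hpg.2), Real.log_div hpg.1 hpg.2]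
      ring
  have hmarginal : ∀ {X : Finset α} {f : (∀ i, Ω i) → ℝ}, DependsOn f (X : Set α) →
      condAverage X r = f → 𝔼 φ, r φ * -Real.log (f φ) = entropy f := by
    intro X f hf hrf
    have hlogf : DependsOn (fun φ => -Real.log (f φ)) (X : Set α) := fun φ ψ hφ => by
      simp only [hf hφ]
    rw [expect_mul_of_dependsOn r hlogf, hrf]
    simp only [entropy, Real.negMulLog_eq_neg, mul_neg]
  rw [entropy]
  simp only [hlog, expect_sub_distrib, expect_add_distrib]
  rw [hmarginal hqU hrU, hmarginal hpY hrY, hmarginal (dependsOn_condAverage _ p) hrg]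

end MarkovGluing

section HomDensity

variable {α α' β : Type*} [Fintype α] [Fintype α'] [Fintype β]

theorem homDensity_congr {H : SimpleGraph α} {H' : SimpleGraph α'} (e : H ≃g H')
    (G : SimpleGraph β) : homDensity H G = homDensity H' G := by
  rw [homDensity, homDensity, Nat.card_congr (SimpleGraph.Iso.homCongr e SimpleGraph.Iso.refl),
    Fintype.card_congr e.toEquiv]

theorem edgeCount_congr {α α' : Type*} {H : SimpleGraph α} {H' : SimpleGraph α'} (e : H ≃g H') :
    edgeCount H = edgeCount H' :=
  Nat.card_congr e.mapEdgeSet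

theorem edgeCount_induce {α : Type*} (H : SimpleGraph α) (X : Set α) :
    edgeCount (H.induce X) = {e ∈ H.edgeSet | ∀ v ∈ e, v ∈ X}.ncard := by
  have himage : {e ∈ H.edgeSet | ∀ v ∈ e, v ∈ X} =
      Sym2.map Subtype.val '' (H.induce X).edgeSet := by
    ext e
    constructor
    · rintro ⟨he, hX⟩
      induction e with
      | h u v =>
        exact ⟨s(⟨u, hX u (Sym2.mem_mk_left u v)⟩, ⟨v, hX v (Sym2.mem_mk_right u v)⟩), he, rfl⟩
    · rintro ⟨e, he, rfl⟩
      induction e with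
      | h u v => exact ⟨he, by simp⟩
  rw [himage, Set.ncard_image_of_injective _ (Sym2.map.injective Subtype.val_injective)]
  rfl

theorem edgeCount_induce_mono {α : Type*} [Finite α] (H : SimpleGraph α) {X Y : Set α}
    (h : X ⊆ Y) : edgeCount (H.induce X) ≤ edgeCount (H.induce Y) := by
  simp only [edgeCount_induce]
  exact Set.ncard_le_ncard fun e he => ⟨he.1, fun v hv => h (he.2 v hv)⟩

theorem edgeCount_induce_add_le {α : Type*} [Finite α] (H : SimpleGraph α) (X Y : Set α) :
    edgeCount (H.induce X) + edgeCount (H.induce Y) ≤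
      edgeCount (H.induce (X ∪ Y)) + edgeCount (H.induce (X ∩ Y)) := by
  simp only [edgeCount_induce]
  rw [← Set.ncard_union_add_ncard_inter]
  refine add_le_add (Set.ncard_le_ncard ?_) (Set.ncard_le_ncard ?_)
  · rintro e (he | he)
    · exact ⟨he.1, fun v hv => Or.inl (he.2 v hv)⟩
    · exact ⟨he.1, fun v hv => Or.inr (he.2 v hv)⟩
  · exact fun e he => ⟨he.1.1, fun v hv => ⟨he.1.2 v hv, he.2.2 v hv⟩⟩

variable [DecidableEq α]

open Classical in
/-- The maps `α → β` that restrict to a homomorphism from `H[X]` to `G`. -/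
noncomputable def homsOn (H : SimpleGraph α) (G : SimpleGraph β) (X : Finset α) :
    Finset (α → β) :=
  {φ | ∀ u ∈ X, ∀ v ∈ X, H.Adj u v → G.Adj (φ u) (φ v)}

variable {H : SimpleGraph α} {G : SimpleGraph β} {X Y : Finset α}

theorem mem_homsOn {φ : α → β} :
    φ ∈ homsOn H G X ↔ ∀ u ∈ X, ∀ v ∈ X, H.Adj u v → G.Adj (φ u) (φ v) := by
  simp [homsOn]

theorem homsOn_anti (h : X ⊆ Y) : homsOn H G Y ⊆ homsOn H G X := fun φ hφ => by
  rw [mem_homsOn] at hφ ⊢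
  exact fun u hu v hv => hφ u (h hu) v (h hv)

theorem homDensity_eq_expect (H : SimpleGraph α) (G : SimpleGraph β) :
    homDensity H G = 𝔼 θ : α → β,
      Set.indicator {θ | ∀ u v, H.Adj u v → G.Adj (θ u) (θ v)} (1 : (α → β) → ℝ) θ := by
  classical
  rw [homDensity, Fintype.expect_eq_sum_div_card, Fintype.card_fun, Nat.cast_pow]
  congr 1
  let e : (H →g G) ≃ {θ : α → β // ∀ u v, H.Adj u v → G.Adj (θ u) (θ v)} :=
    ⟨fun f => ⟨f, fun _ _ h => f.map_rel h⟩, fun θ => ⟨θ.1, θ.2 _ _⟩, fun _ => rfl, fun _ => rfl⟩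
  rw [Nat.card_congr e, Nat.card_eq_fintype_card, Fintype.card_subtype]
  simp [Set.indicator_apply]

theorem homDensity_eq_dens_homsOn_univ (H : SimpleGraph α) (G : SimpleGraph β) :
    homDensity H G = (homsOn H G univ).dens := by
  classical
  rw [homDensity_eq_expect, ← expect_indicator_one]
  simp [homsOn]

theorem homDensity_induce [Nonempty β] (H : SimpleGraph α) (G : SimpleGraph β) (X : Finset α) :
    homDensity (H.induce (X : Set α)) G = (homsOn H G X).dens := by
  rw [← expect_indicator_one]
  refine (homDensity_eq_expect _ _).trans
    ((expect_comp_of_injective Subtype.val_injective _).symm.trans ?_)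
  refine expect_congr rfl fun φ _ => ?_
  classical
  simp [homsOn, Set.indicator_apply]

theorem dependsOn_uniformDensity_homsOn (H : SimpleGraph α) (G : SimpleGraph β) (X : Finset α) :
    DependsOn (uniformDensity (homsOn H G X)) (X : Set α) := fun φ ψ h => by
  classical
  have hiff : φ ∈ homsOn H G X ↔ ψ ∈ homsOn H G X := by
    simp only [mem_homsOn]
    refine forall₂_congr fun u hu => forall₂_congr fun v hv => ?_
    rw [h u hu, h v hv]
  simp only [uniformDensity, Set.indicator_apply, mem_coe, hiff, Pi.one_apply]

theorem mem_homsOn_iff_comp_mem_homsOn {σ : Equiv.Perm α}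
    {e : H.induce (X : Set α) ≃g H.induce (Y : Set α)} (hσ : ∀ x : (X : Set α), σ x = e x)
    {φ : α → β} :
    φ ∈ homsOn H G Y ↔ φ ∘ σ ∈ homsOn H G X := by
  simp only [mem_homsOn]
  calc (∀ u ∈ Y, ∀ v ∈ Y, H.Adj u v → G.Adj (φ u) (φ v))
      ↔ ∀ u v : (Y : Set α), H.Adj u v → G.Adj (φ u) (φ v) := by simp
    _ ↔ ∀ x y : (X : Set α), H.Adj (e x) (e y) → G.Adj (φ (e x)) (φ (e y)) :=
        e.surjective.forall₂
    _ ↔ ∀ x y : (X : Set α), H.Adj x y → G.Adj (φ (σ x)) (φ (σ y)) :=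
        forall₂_congr fun x y => by
          rw [hσ, hσ]
          exact imp_congr_left e.map_rel_iff
    _ ↔ _ := by simp

theorem condAverage_uniformDensity_homsOn_eq [Nonempty β]
    (e : H.induce (X : Set α) ≃g H.induce (Y : Set α))
    (he : ∀ v (hX : v ∈ X), v ∈ Y → (e ⟨v, hX⟩ : α) = v) :
    condAverage (X ∩ Y) (uniformDensity (homsOn H G X)) =
      condAverage (X ∩ Y) (uniformDensity (homsOn H G Y)) := by
  classical
  let σ : Equiv.Perm α := Equiv.extendSubtype (p := (· ∈ X)) (q := (· ∈ Y)) e.toEquiv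
  have hσ : ∀ x : (X : Set α), σ x = e x := fun x => Equiv.extendSubtype_apply_of_mem _ _ x.2
  have hfix : ∀ v ∈ X ∩ Y, σ v = v := fun v hv => by
    rw [mem_inter] at hv
    exact (hσ ⟨v, hv.1⟩).trans (he v hv.1 hv.2)
  have hdens : ((homsOn H G X).dens : ℝ) = (homsOn H G Y).dens := by
    rw [← homDensity_induce H G X, ← homDensity_induce H G Y, homDensity_congr e]
  rw [← condAverage_comp_perm hfix]
  congr 1
  funext φ
  simp only [uniformDensity, Set.indicator_apply, mem_coe, hdens,
    mem_homsOn_iff_comp_mem_homsOn hσ]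
  rfl

theorem homDensity_of_isEmpty {α : Type*} [Fintype α] [IsEmpty α] (H : SimpleGraph α)
    (G : SimpleGraph β) : homDensity H G = 1 := by
  classical
  simp [homDensity_eq_dens_homsOn_univ, homsOn]

theorem edgeCount_of_isEmpty {α : Type*} [IsEmpty α] (H : SimpleGraph α) : edgeCount H = 0 := by
  simp [edgeCount, Subsingleton.elim H ⊥]

end HomDensity

section InducedSidorenko

variable {κ γ β : Type*} [Fintype κ] [Fintype γ] [Fintype β]

/-- The inequality `δ ^ e(J) * t_{J[S]}(G) ≤ δ ^ e(J[S]) * t_J(G)` for every induced subgraph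
`J[S]` of `J`: passing from `J[S]` to `J` costs at most a factor `δ` per additional edge. The case
`S = ∅` is a Sidorenko-type bound for `J`. -/
def IsInducedSidorenko (δ : ℝ) (J : SimpleGraph γ) (G : SimpleGraph β) : Prop :=
  ∀ S : Finset γ, δ ^ edgeCount J * homDensity (J.induce (S : Set γ)) G ≤
    δ ^ edgeCount (J.induce (S : Set γ)) * homDensity J G

namespace IsInducedSidorenko

variable {δ : ℝ} {J : SimpleGraph γ} {G : SimpleGraph β}

theorem le_of_embedding (h : IsInducedSidorenko δ J G) {K : SimpleGraph κ} (f : K ↪g J) :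
    δ ^ edgeCount J * homDensity K G ≤ δ ^ edgeCount K * homDensity J G := by
  classical
  obtain ⟨e⟩ : Nonempty (K ≃g J.induce ((Set.range f).toFinset : Set γ)) := by
    rw [Set.coe_toFinset]
    exact ⟨f.isoInduceRange⟩
  rw [homDensity_congr e, edgeCount_congr e]
  exact h _

theorem pow_edgeCount_le_homDensity (h : IsInducedSidorenko δ J G) :
    δ ^ edgeCount J ≤ homDensity J G := by
  have hempty := h ∅
  have : IsEmpty ((∅ : Finset γ) : Set γ) := by simp
  rwa [homDensity_of_isEmpty (J.induce _), edgeCount_of_isEmpty (J.induce _), mul_one, pow_zero,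
    one_mul] at hempty

variable {α : Type*} [Fintype α] [DecidableEq α] [Nonempty β] {H : SimpleGraph α} {S Y : Finset α}

theorem pow_edgeCount_le_dens_homsOn (h : IsInducedSidorenko δ J G)
    (hY : H.induce (Y : Set α) ≃g J) :
    δ ^ edgeCount (H.induce (Y : Set α)) ≤ ((homsOn H G Y).dens : ℝ) := by
  rw [← homDensity_induce, homDensity_congr hY, edgeCount_congr hY]
  exact h.pow_edgeCount_le_homDensity

theorem nonempty_homsOn (h : IsInducedSidorenko δ J G) (hδ : 0 < δ)
    (hY : H.induce (Y : Set α) ≃g J) : (homsOn H G Y).Nonempty := by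
  simpa using (pow_pos hδ _).trans_le (h.pow_edgeCount_le_dens_homsOn hY)

theorem mul_log_le (h : IsInducedSidorenko δ J G) (hδ : 0 < δ)
    (hY : H.induce (Y : Set α) ≃g J) (hS : S ⊆ Y) :
    ((edgeCount (H.induce (Y : Set α)) : ℝ) - edgeCount (H.induce (S : Set α))) * Real.log δ ≤
      Real.log (homsOn H G Y).dens - Real.log (homsOn H G S).dens := by
  have hposY : 0 < ((homsOn H G Y).dens : ℝ) := by simpa using h.nonempty_homsOn hδ hY
  have hposS : 0 < ((homsOn H G S).dens : ℝ) := by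
    simpa using (h.nonempty_homsOn hδ hY).mono (homsOn_anti hS)
  have hle := h.le_of_embedding (hY.toEmbedding.comp (H.induceHomOfLE (coe_subset.2 hS)))
  rw [← homDensity_congr hY, ← edgeCount_congr hY, homDensity_induce, homDensity_induce] at hle
  have hlog := Real.log_le_log (by positivity) hle
  rw [Real.log_mul (by positivity) hposS.ne', Real.log_mul (by positivity) hposY.ne',
    Real.log_pow, Real.log_pow] at hlog
  linarith

end IsInducedSidorenko

end InducedSidorenko

section TreeGluing

theorem connected_induce_insert {ι : Type*} {T : SimpleGraph ι} {𝒮 : Set ι}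
    (h𝒮 : (T.induce 𝒮).Connected) {X Y : ι} (hX : X ∈ 𝒮) (hXY : T.Adj X Y) :
    (T.induce (insert Y 𝒮)).Connected := by
  rw [Set.insert_eq, Set.union_comm]
  exact SimpleGraph.connected_induce_union h𝒮.preconnected .of_subsingleton hX rfl hXY

theorem univ_of_connected_induction {ι : Type*} [Fintype ι] [DecidableEq ι] {T : SimpleGraph ι}
    (hT : T.Connected) {P : Finset ι → Prop} {r : ι} (singleton : P {r})
    (insert : ∀ 𝒮 : Finset ι, (T.induce (𝒮 : Set ι)).Connected → P 𝒮 →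
      ∀ X ∈ 𝒮, ∀ Y ∉ 𝒮, T.Adj X Y → P (insert Y 𝒮)) : P univ := by
  obtain ⟨𝒮, ⟨hconn, hP⟩, hmax⟩ :=
    (Set.toFinite {𝒮 : Finset ι | (T.induce (𝒮 : Set ι)).Connected ∧ P 𝒮}).exists_maximal
      ⟨{r}, by rw [coe_singleton]; exact .of_subsingleton, singleton⟩
  suffices 𝒮 = univ from this ▸ hP
  by_contra hne
  obtain ⟨y, hy⟩ : ∃ y, y ∉ 𝒮 := by simpa [eq_univ_iff_forall] using hne
  obtain ⟨x⟩ := hconn.nonempty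
  obtain ⟨p⟩ := hT.preconnected x y
  obtain ⟨e, -, hX, hY⟩ := p.exists_boundary_dart (𝒮 : Set ι) x.2 hy
  have hle := hmax ⟨by rw [coe_insert]; exact connected_induce_insert hconn hX e.adj,
    insert 𝒮 hconn hP _ hX _ hY e.adj⟩ (subset_insert _ _)
  exact hY (hle (mem_insert_self _ _))

variable {α ι : Type*} [DecidableEq α] {H : SimpleGraph α} {bag : ι → Finset α}
  {T : SimpleGraph ι}

theorem IsTreeDecomp.biUnion_inter_bag (h : IsTreeDecomp H bag T) {𝒮 : Finset ι}
    (h𝒮 : (T.induce (𝒮 : Set ι)).Connected) {X Y : ι} (hX : X ∈ 𝒮) (hY : Y ∉ 𝒮)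
    (hXY : T.Adj X Y) : 𝒮.biUnion bag ∩ bag Y = bag X ∩ bag Y := by
  refine (inter_subset_inter_right (subset_biUnion_of_mem bag hX)).antisymm' fun v hv => ?_
  simp only [mem_inter, mem_biUnion] at hv ⊢
  obtain ⟨⟨Z, hZ, hvZ⟩, hvY⟩ := hv
  obtain ⟨p, hp⟩ := h𝒮.exists_isPath ⟨X, hX⟩ ⟨Z, hZ⟩
  let p' : T.Walk X Z := p.map (SimpleGraph.Embedding.induce (𝒮 : Set ι)).toHom
  have hp' : p'.IsPath := hp.map Subtype.val_injective
  have hYp' : Y ∉ p'.support := fun hmem => by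
    obtain ⟨w, -, rfl⟩ := List.mem_map.1 (p.support_map _ ▸ hmem)
    exact hY w.2
  have hpath : (SimpleGraph.Walk.cons hXY.symm p').IsPath := hp'.cons hYp'
  exact ⟨h.2.2.2 Y Z X _ hpath (by simp) (mem_inter.2 ⟨hvY, hvZ⟩), hvY⟩

variable [Fintype α] {β : Type*} [Fintype β] {G : SimpleGraph β} {𝒮 : Finset ι} {X Y : ι}
  {q : (α → β) → ℝ}

/-- A density `q` on maps from the union of the bags in `𝒮` to `G` whose marginal on each of these
bags is the uniform distribution on homomorphisms. Maps are extended arbitrarily to all of `α`. -/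
structure IsHomCoupling (H : SimpleGraph α) (G : SimpleGraph β) (bag : ι → Finset α)
    (𝒮 : Finset ι) (q : (α → β) → ℝ) : Prop where
  nonneg : 0 ≤ q
  dependsOn : DependsOn q (𝒮.biUnion bag : Set α)
  marginal : ∀ Z ∈ 𝒮, condAverage (bag Z) q = uniformDensity (homsOn H G (bag Z))

namespace IsHomCoupling

theorem singleton (H : SimpleGraph α) (G : SimpleGraph β) (bag : ι → Finset α) (r : ι) :
    IsHomCoupling H G bag {r} (uniformDensity (homsOn H G (bag r))) where
  nonneg := uniformDensity_nonneg _
  dependsOn := by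
    rw [singleton_biUnion]
    exact dependsOn_uniformDensity_homsOn H G (bag r)
  marginal Z hZ := by
    rw [mem_singleton.1 hZ]
    exact condAverage_eq_self (dependsOn_uniformDensity_homsOn H G (bag r))

theorem condAverage_inter_eq [Nonempty β] (hq : IsHomCoupling H G bag 𝒮 q) (hX : X ∈ 𝒮)
    (hinter : 𝒮.biUnion bag ∩ bag Y = bag X ∩ bag Y)
    (e : H.induce (bag X : Set α) ≃g H.induce (bag Y : Set α))
    (he : ∀ v (hX : v ∈ bag X), v ∈ bag Y → (e ⟨v, hX⟩ : α) = v) :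
    condAverage (𝒮.biUnion bag ∩ bag Y) q =
      condAverage (𝒮.biUnion bag ∩ bag Y) (uniformDensity (homsOn H G (bag Y))) := by
  rw [hinter, ← condAverage_uniformDensity_homsOn_eq e he, ← hq.marginal X hX,
    condAverage_condAverage inter_subset_left]

theorem markovGlue [DecidableEq ι] (hq : IsHomCoupling H G bag 𝒮 q)
    (heq : condAverage (𝒮.biUnion bag ∩ bag Y) q =
      condAverage (𝒮.biUnion bag ∩ bag Y) (uniformDensity (homsOn H G (bag Y)))) :
    IsHomCoupling H G bag (insert Y 𝒮)
      (markovGlue (𝒮.biUnion bag) (bag Y) q (uniformDensity (homsOn H G (bag Y)))) where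
  nonneg := markovGlue_nonneg hq.nonneg (uniformDensity_nonneg _)
  dependsOn := by
    rw [biUnion_insert, union_comm]
    exact dependsOn_markovGlue hq.dependsOn (dependsOn_uniformDensity_homsOn H G (bag Y))
  marginal Z hZ := by
    have hdep := dependsOn_uniformDensity_homsOn H G (bag Y)
    rcases mem_insert.1 hZ with rfl | hZ
    · exact condAverage_right_markovGlue (uniformDensity_nonneg _) hq.dependsOn hdep heq
    · rw [← condAverage_condAverage (subset_biUnion_of_mem bag hZ),
        condAverage_left_markovGlue hq.nonneg hq.dependsOn hdep heq, hq.marginal Z hZ]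

theorem expect_eq_one (hq : IsHomCoupling H G bag 𝒮 q) {Z : ι} (hZ : Z ∈ 𝒮)
    (hne : (homsOn H G (bag Z)).Nonempty) : 𝔼 φ, q φ = 1 := by
  rw [← expect_condAverage (bag Z), hq.marginal Z hZ, expect_uniformDensity hne]

theorem eq_zero_of_notMem_homsOn (hq : IsHomCoupling H G bag 𝒮 q) {Z : ι} (hZ : Z ∈ 𝒮)
    {φ : α → β} (hφ : φ ∉ homsOn H G (bag Z)) : q φ = 0 :=
  eq_zero_of_condAverage_eq_zero hq.nonneg <| by
    rw [hq.marginal Z hZ, uniformDensity_of_notMem hφ]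

theorem exp_entropy_le_homDensity [Fintype ι] (hq : IsHomCoupling H G bag univ q)
    (hT : IsTreeDecomp H bag T) (hq1 : 𝔼 φ, q φ = 1) : Real.exp (entropy q) ≤ homDensity H G := by
  rw [homDensity_eq_dens_homsOn_univ]
  refine exp_entropy_le_dens hq.nonneg hq1 fun φ hφ => ?_
  simp only [mem_homsOn, not_forall] at hφ
  obtain ⟨u, -, v, -, huv, hφ⟩ := hφ
  obtain ⟨Z, hu, hv⟩ := hT.2.2.1 u v huv
  exact hq.eq_zero_of_notMem_homsOn (mem_univ Z) fun hmem => hφ (mem_homsOn.1 hmem u hu v hv huv)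

end IsHomCoupling

theorem entropy_condAverage_uniformDensity_homsOn_le {S Y : Finset α} (hSY : S ⊆ Y)
    (hne : (homsOn H G Y).Nonempty) :
    entropy (condAverage S (uniformDensity (homsOn H G Y))) ≤ Real.log (homsOn H G S).dens := by
  refine entropy_le_log_dens (condAverage_nonneg S (uniformDensity_nonneg _)) ?_ fun φ hφ => ?_
  · rw [expect_condAverage, expect_uniformDensity hne]
  · refine expect_eq_zero fun ψ _ => uniformDensity_of_notMem fun hmem => hφ ?_
    rw [mem_homsOn]
    intro u hu v hv huv
    simpa [hu, hv] using mem_homsOn.1 hmem u (hSY hu) v (hSY hv) huv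

theorem IsHomCoupling.le_entropy_markovGlue {γ : Type*} [Fintype γ] [Nonempty β]
    {J : SimpleGraph γ} {δ : ℝ} (hδ0 : 0 < δ) (hδ1 : δ ≤ 1) (hJ : IsInducedSidorenko δ J G)
    (hY : H.induce (bag Y : Set α) ≃g J) (hq : IsHomCoupling H G bag 𝒮 q)
    (heq : condAverage (𝒮.biUnion bag ∩ bag Y) q =
      condAverage (𝒮.biUnion bag ∩ bag Y) (uniformDensity (homsOn H G (bag Y))))
    (hent : edgeCount (H.induce (𝒮.biUnion bag : Set α)) * Real.log δ ≤ entropy q) :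
    edgeCount (H.induce (𝒮.biUnion bag ∪ bag Y : Set α)) * Real.log δ ≤
      entropy (_root_.markovGlue (𝒮.biUnion bag) (bag Y) q
        (uniformDensity (homsOn H G (bag Y)))) := by
  set U := 𝒮.biUnion bag
  have hne := hJ.nonempty_homsOn hδ0 hY
  rw [entropy_markovGlue hq.nonneg (uniformDensity_nonneg _) hq.dependsOn
    (dependsOn_uniformDensity_homsOn H G (bag Y)) heq, entropy_uniformDensity hne]
  have hinter := entropy_condAverage_uniformDensity_homsOn_le
    (inter_subset_right : U ∩ bag Y ⊆ bag Y) hne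
  have hstep := hJ.mul_log_le hδ0 hY (inter_subset_right : U ∩ bag Y ⊆ bag Y)
  have hedges : (edgeCount (H.induce (U : Set α)) + edgeCount (H.induce (bag Y : Set α)) : ℝ) ≤
      edgeCount (H.induce (U ∪ bag Y : Set α)) + edgeCount (H.induce (U ∩ bag Y : Finset α)) := by
    rw [coe_inter]
    exact_mod_cast edgeCount_induce_add_le H (U : Set α) (bag Y)
  have := mul_le_mul_of_nonpos_right hedges (Real.log_nonpos hδ0.le hδ1)
  linarith

theorem IsJDecomp.exists_isHomCoupling {γ : Type*} [Fintype γ] [Nonempty β] [Fintype ι]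
    {J : SimpleGraph γ} {δ : ℝ} (hH : IsJDecomp H J bag T) (hδ0 : 0 < δ) (hδ1 : δ ≤ 1)
    (hJ : IsInducedSidorenko δ J G) :
    ∃ q, IsHomCoupling H G bag univ q ∧
      edgeCount (H.induce (univ.biUnion bag : Set α)) * Real.log δ ≤ entropy q := by
  classical
  obtain ⟨hT, hbag, hfix⟩ := hH
  obtain ⟨r⟩ := hT.1.connected.nonempty
  refine univ_of_connected_induction (r := r) hT.1.connected
    (P := fun 𝒮 => ∃ q, IsHomCoupling H G bag 𝒮 q ∧
      edgeCount (H.induce (𝒮.biUnion bag : Set α)) * Real.log δ ≤ entropy q) ?_ ?_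
  · obtain ⟨e⟩ := hbag r
    refine ⟨_, IsHomCoupling.singleton H G bag r, ?_⟩
    rw [singleton_biUnion, entropy_uniformDensity (hJ.nonempty_homsOn hδ0 e), ← Real.log_pow]
    exact Real.log_le_log (by positivity) (hJ.pow_edgeCount_le_dens_homsOn e)
  · rintro 𝒮 hconn ⟨q, hq, hent⟩ X hX Y hY hXY
    obtain ⟨e, he⟩ := hfix X Y hXY
    obtain ⟨eY⟩ := hbag Y
    have heq := hq.condAverage_inter_eq hX (hT.biUnion_inter_bag hconn hX hY hXY) e he
    refine ⟨_, hq.markovGlue heq, ?_⟩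
    rw [biUnion_insert, union_comm, coe_union]
    exact hq.le_entropy_markovGlue hδ0 hδ1 hJ eY heq hent

theorem IsJDecomp.pow_edgeCount_le_homDensity {γ : Type*} [Fintype γ] [Nonempty β] [Finite ι]
    {J : SimpleGraph γ} {δ : ℝ} (hH : IsJDecomp H J bag T) (hδ0 : 0 < δ) (hδ1 : δ ≤ 1)
    (hJ : IsInducedSidorenko δ J G) : δ ^ edgeCount H ≤ homDensity H G := by
  have := Fintype.ofFinite ι
  obtain ⟨q, hq, hent⟩ := hH.exists_isHomCoupling hδ0 hδ1 hJ
  obtain ⟨hT, hbag, -⟩ := hH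
  obtain ⟨r⟩ := hT.1.connected.nonempty
  obtain ⟨e⟩ := hbag r
  have hcover : (univ.biUnion bag : Set α) = Set.univ := by
    simpa [Set.eq_univ_iff_forall] using hT.2.1
  rw [hcover, edgeCount_congr (SimpleGraph.induceUnivIso H)] at hent
  calc δ ^ edgeCount H = Real.exp (edgeCount H * Real.log δ) := by
        rw [Real.exp_nat_mul, Real.exp_log hδ0]
    _ ≤ Real.exp (entropy q) := Real.exp_le_exp.2 hent
    _ ≤ homDensity H G := hq.exp_entropy_le_homDensity hT
        (hq.expect_eq_one (mem_univ r) (hJ.nonempty_homsOn hδ0 e))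

end TreeGluing

section MeanRowSum

open Matrix

variable {β : Type*} [Fintype β]

/-- The average of the row sums of a square matrix. For `A` the normalized adjacency matrix of a
graph, `meanRowSum (A ^ j)` is the homomorphism density of the path with `j` edges. -/
noncomputable def meanRowSum (A : Matrix β β ℝ) : ℝ :=
  𝔼 x, ∑ y, A x y

theorem meanRowSum_nonneg {A : Matrix β β ℝ} (hA : ∀ x y, 0 ≤ A x y) : 0 ≤ meanRowSum A :=
  expect_nonneg fun x _ => sum_nonneg fun y _ => hA x y

/-- The matrix of the operator `f ↦ 𝔼 y, A x y * f y` on functions on the uniform probability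
space `β`. -/
noncomputable def averagingMatrix (A : Matrix β β ℝ) : Matrix β β ℝ :=
  (Fintype.card β : ℝ)⁻¹ • A

theorem averagingMatrix_mul_apply (A B : Matrix β β ℝ) (x y : β) :
    (averagingMatrix A * B) x y = 𝔼 z, A x z * B z y := by
  simp [averagingMatrix, mul_apply, mul_sum, mul_assoc, Fintype.expect_eq_sum_div_card,
    div_eq_inv_mul]

theorem meanRowSum_mul_averaging_one_mul (P Q : Matrix β β ℝ) :
    meanRowSum (P * (averagingMatrix (Matrix.of 1) * Q)) = meanRowSum P * meanRowSum Q := by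
  have hleft : ∀ z y, (averagingMatrix (Matrix.of 1) * Q : Matrix β β ℝ) z y = 𝔼 v, Q v y :=
    fun z y => by simp [averagingMatrix_mul_apply]
  calc _ = 𝔼 x, (∑ z, P x z) * ∑ y, 𝔼 v, Q v y := by
        refine expect_congr rfl fun x _ => ?_
        rw [sum_mul_sum, sum_comm]
        simp only [mul_apply (M := P), hleft]
    _ = meanRowSum P * meanRowSum Q := by
        rw [← expect_mul]
        exact congrArg (_ * ·) (expect_sum_comm _ _ _).symm

theorem expect_fin_succ {r : ℕ} (F : (Fin (r + 1) → β) → ℝ) :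
    𝔼 θ, F θ = 𝔼 θ : Fin r → β, 𝔼 x, F (Fin.cons x θ) := by
  rw [expect_comm, ← expect_product', univ_product_univ]
  exact (Fintype.expect_equiv (Fin.consEquiv fun _ => β) _ _ fun _ => rfl).symm

variable [DecidableEq β]

theorem meanRowSum_one [Nonempty β] : meanRowSum (1 : Matrix β β ℝ) = 1 := by
  simp [meanRowSum, one_apply]

theorem exists_meanRowSum_pow_eq_sum [Nonempty β] {A : Matrix β β ℝ} (hA : A.IsHermitian) :
    ∃ w z : β → ℝ, (∀ i, 0 ≤ w i) ∧ ∑ i, w i = 1 ∧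
      ∀ j, meanRowSum (A ^ j) = ∑ i, w i * z i ^ j := by
  let U : Matrix β β ℝ := hA.eigenvectorUnitary
  let w : β → ℝ := fun i => (Fintype.card β : ℝ)⁻¹ * (1 ᵥ* U) i ^ 2
  have hmoment : ∀ j, meanRowSum (A ^ j) = ∑ i, w i * hA.eigenvalues i ^ j := fun j => by
    have hpow : A ^ j = U * diagonal (fun i => hA.eigenvalues i ^ j) * Uᵀ := by
      conv_lhs => rw [hA.spectral_theorem]
      rw [← map_pow, diagonal_pow, Unitary.conjStarAlgAut_apply]
      rfl
    calc meanRowSum (A ^ j) = (Fintype.card β : ℝ)⁻¹ * (1 ⬝ᵥ A ^ j *ᵥ 1) := by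
          simp [meanRowSum, Fintype.expect_eq_sum_div_card, dotProduct, mulVec, div_eq_inv_mul]
      _ = (Fintype.card β : ℝ)⁻¹ *
            (1 ᵥ* U ⬝ᵥ diagonal (fun i => hA.eigenvalues i ^ j) *ᵥ (1 ᵥ* U)) := by
          rw [hpow, ← mulVec_mulVec, ← mulVec_mulVec, mulVec_transpose, dotProduct_mulVec]
      _ = _ := by
          simp only [dotProduct, mulVec_diagonal, mul_sum, w]
          exact sum_congr rfl fun i _ => by ring
  refine ⟨w, hA.eigenvalues, fun i => by positivity, ?_, hmoment⟩
  simpa [meanRowSum_one] using (hmoment 0).symm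

theorem sum_mul_pow_le_rpow {ι : Type*} [Fintype ι] {w : ι → ℝ} (hw : ∀ i, 0 ≤ w i)
    (hw1 : ∑ i, w i = 1) (z : ι → ℝ) {j M : ℕ} (hM : Even M) (hjM : j ≤ M) :
    ∑ i, w i * z i ^ j ≤ (∑ i, w i * z i ^ M) ^ ((j : ℝ) / M) := by
  rcases j.eq_zero_or_pos with rfl | hj
  · simp [hw1]
  have hj0 : (j : ℝ) ≠ 0 := by exact_mod_cast hj.ne'
  calc ∑ i, w i * z i ^ j ≤ ∑ i, w i * |z i| ^ j := by
        refine sum_le_sum fun i _ => mul_le_mul_of_nonneg_left ?_ (hw i)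
        rw [← abs_pow]
        exact le_abs_self _
    _ ≤ (∑ i, w i * (|z i| ^ j) ^ ((M : ℝ) / j)) ^ (1 / ((M : ℝ) / j)) :=
        Real.arith_mean_le_rpow_mean _ _ _ (fun i _ => hw i) hw1 (fun i _ => by positivity)
          ((one_le_div (by positivity)).2 (by exact_mod_cast hjM))
    _ = _ := by
        rw [one_div_div]
        congr! 3 with i
        rw [← Real.rpow_natCast, ← Real.rpow_mul (abs_nonneg _), mul_div_cancel₀ _ hj0,
          Real.rpow_natCast, hM.pow_abs]

theorem exists_meanRowSum_pow_le [Nonempty β] {A : Matrix β β ℝ} (hA : A.IsHermitian) {M : ℕ}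
    (hM : Even M) (hM0 : M ≠ 0) :
    ∃ b : ℝ, 0 ≤ b ∧ meanRowSum (A ^ M) = b ^ M ∧ ∀ j ≤ M, meanRowSum (A ^ j) ≤ b ^ j := by
  obtain ⟨w, z, hw, hw1, hmoment⟩ := exists_meanRowSum_pow_eq_sum hA
  have hpos : 0 ≤ meanRowSum (A ^ M) := by
    rw [hmoment]
    exact sum_nonneg fun i _ => mul_nonneg (hw i) (hM.pow_nonneg _)
  refine ⟨meanRowSum (A ^ M) ^ (M : ℝ)⁻¹, by positivity,
    (Real.rpow_inv_natCast_pow hpos hM0).symm, fun j hj => ?_⟩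
  rw [← Real.rpow_natCast, ← Real.rpow_mul hpos, inv_mul_eq_div, hmoment, hmoment]
  exact sum_mul_pow_le_rpow hw hw1 z hM hj

theorem listProd_apply_nonneg {L : List (Matrix β β ℝ)} (hL : ∀ A ∈ L, ∀ x y, 0 ≤ A x y)
    (x y : β) : 0 ≤ L.prod x y := by
  induction L generalizing x with
  | nil => rw [List.prod_nil, one_apply]; positivity
  | cons A L ih =>
    rw [List.prod_cons, mul_apply]
    exact sum_nonneg fun z _ => mul_nonneg (hL A (by simp) x z)
      (ih (fun B hB => hL B (by simp [hB])) z)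

theorem meanRowSum_pow_mul_listProd_le {A : Matrix β β ℝ} (hA : ∀ x y, 0 ≤ A x y)
    {b : ℝ} (hb : 0 ≤ b) {M : ℕ} (hAb : ∀ j ≤ M, meanRowSum (A ^ j) ≤ b ^ j) {r : ℕ}
    (e : Fin r → Prop) [DecidablePred e] {j : ℕ} (hj : j + #{i | e i} ≤ M) :
    meanRowSum (A ^ j *
      (List.ofFn fun i => if e i then A else averagingMatrix (Matrix.of 1)).prod) ≤
        b ^ (j + #{i | e i}) := by
  induction r generalizing j with
  | zero => simpa using hAb j (by simpa using hj)
  | succ r ih =>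
    rw [List.ofFn_succ, List.prod_cons]
    rw [Fin.card_filter_univ_succ] at hj ⊢
    by_cases h0 : e 0
    · simp only [h0, if_true] at hj ⊢
      rw [← mul_assoc, ← pow_succ, add_comm #{x | _}, ← add_assoc]
      exact ih (fun i => e i.succ) (by omega)
    · simp only [h0, if_false] at hj ⊢
      rw [meanRowSum_mul_averaging_one_mul, pow_add]
      have htail := ih (fun i => e i.succ) (j := 0) (by omega)
      rw [pow_zero, one_mul, zero_add] at htail
      refine mul_le_mul (hAb j (by omega)) htail (meanRowSum_nonneg (listProd_apply_nonneg ?_))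
        (by positivity)
      refine (List.forall_mem_ofFn_iff ..).2 fun i x y => ?_
      split_ifs
      · exact hA x y
      · change 0 ≤ (Fintype.card β : ℝ)⁻¹ * 1
        positivity

theorem expect_prod_path {r : ℕ} (A : Fin r → Matrix β β ℝ) (F : β → β → ℝ) :
    𝔼 θ : Fin (r + 1) → β, (∏ i, A i (θ i.castSucc) (θ i.succ)) * F (θ 0) (θ (Fin.last r)) =
      𝔼 x, ∑ y, (List.ofFn fun i => averagingMatrix (A i)).prod x y * F x y := by
  induction r generalizing F with
  | zero => simp [expect_fin_succ, one_apply]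
  | succ r ih =>
    let F' : β → β → ℝ := fun z y => 𝔼 x, A 0 x z * F x y
    let P : Matrix β β ℝ := (List.ofFn fun i => averagingMatrix (A i.succ)).prod
    calc 𝔼 θ : Fin (r + 2) → β, (∏ i, A i (θ i.castSucc) (θ i.succ)) * F (θ 0) (θ (Fin.last _))
        = 𝔼 θ : Fin (r + 1) → β, (∏ i : Fin r, A i.succ (θ i.castSucc) (θ i.succ)) *
            F' (θ 0) (θ (Fin.last r)) := by
          rw [expect_fin_succ]
          refine expect_congr rfl fun θ _ => ?_
          rw [mul_expect]
          refine expect_congr rfl fun x _ => ?_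
          simp only [Fin.prod_univ_succ, Fin.cons_zero, Fin.castSucc_zero, Fin.cons_succ,
            ← Fin.succ_castSucc, ← Fin.succ_last]
          ring
      _ = 𝔼 z, ∑ y, P z y * F' z y := ih (fun i => A i.succ) F'
      _ = 𝔼 z, 𝔼 x, ∑ y, P z y * (A 0 x z * F x y) := by
          simp only [F', expect_sum_comm, mul_expect]
      _ = 𝔼 x, ∑ y, (𝔼 z, A 0 x z * P z y) * F x y := by
          rw [expect_comm]
          simp only [expect_sum_comm, expect_mul]
          congr! 3
          ring
      _ = 𝔼 x, ∑ y, (averagingMatrix (A 0) * P) x y * F x y := by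
          simp only [averagingMatrix_mul_apply]
      _ = _ := by rw [List.ofFn_succ, List.prod_cons]

end MeanRowSum

section LocalDensity

open Matrix

theorem two_mul_edgeCount {β : Type*} [Fintype β] (G : SimpleGraph β) [DecidableRel G.Adj] :
    2 * (edgeCount G : ℝ) = ∑ x, ∑ y, G.adjMatrix ℝ x y := by
  classical
  have hdegree := congrArg (Nat.cast (R := ℝ)) G.sum_degrees_eq_twice_card_edges
  push_cast at hdegree
  simp only [edgeCount, Nat.card_eq_fintype_card, ← SimpleGraph.edgeFinset_card, ← hdegree,
    SimpleGraph.degree_eq_sum_if_adj, SimpleGraph.adjMatrix_apply]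

theorem two_mul_edgeCount_induce {β : Type*} (G : SimpleGraph β) [DecidableRel G.Adj]
    (X : Finset β) :
    2 * (edgeCount (G.induce (X : Set β)) : ℝ) = ∑ x ∈ X, ∑ y ∈ X, G.adjMatrix ℝ x y := by
  simp only [← sum_coe_sort X]
  exact two_mul_edgeCount _

theorem exists_indicator_le_of_concaveOn_update {β : Type*} [Finite β] [DecidableEq β]
    {Q : (β → ℝ) → ℝ}
    (hQ : ∀ f a, ConcaveOn ℝ (Set.Icc 0 1) fun s => Q (Function.update f a s)) {f : β → ℝ}
    (hf : ∀ x, f x ∈ Set.Icc 0 1) : ∃ X : Finset β, Q (Set.indicator X 1) ≤ Q f := by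
  have := Fintype.ofFinite β
  have hround : ∀ S : Finset β, ∃ g : β → ℝ, (∀ x, g x ∈ Set.Icc 0 1) ∧
      (∀ x ∈ S, g x = 0 ∨ g x = 1) ∧ Q g ≤ Q f := fun S => by
    induction S using Finset.induction_on with
    | empty => exact ⟨f, hf, by simp, le_rfl⟩
    | insert a S _ ih =>
      obtain ⟨g, hg, hgS, hgf⟩ := ih
      have hmin := (hQ g a).min_le_of_mem_Icc (by simp) (by simp) (hg a)
      rw [Function.update_eq_self, min_le_iff] at hmin
      have hset : ∀ s : ℝ, s = 0 ∨ s = 1 → Q (Function.update g a s) ≤ Q g →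
          ∃ g : β → ℝ, (∀ x, g x ∈ Set.Icc 0 1) ∧ (∀ x ∈ insert a S, g x = 0 ∨ g x = 1) ∧
            Q g ≤ Q f := fun s hs hle => by
        refine ⟨Function.update g a s, fun x => ?_, fun x hx => ?_, hle.trans hgf⟩ <;>
          rcases eq_or_ne x a with rfl | hxa
        · rcases hs with rfl | rfl <;> simp
        · simpa [hxa] using hg x
        · simpa using hs
        · simpa [hxa] using hgS x (by simpa [hxa] using hx)
      exact hmin.elim (hset 0 (.inl rfl)) (hset 1 (.inr rfl))
  obtain ⟨g, -, hg, hgf⟩ := hround univ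
  refine ⟨univ.filter fun x => g x = 1, hgf.trans' (le_of_eq (congrArg Q (funext fun x => ?_)))⟩
  rcases hg x (mem_univ x) with h | h <;> simp [h]

variable {β : Type*} [Fintype β]

theorem LocallyDense.le_edgeCount_induce {G : SimpleGraph β} {ρ d : ℝ} (hG : LocallyDense G ρ d)
    {X : Finset β} (hX : ρ * Fintype.card β ≤ #X) :
    d * #X ^ 2 ≤ 2 * edgeCount (G.induce (X : Set β)) := by
  have h : d / 2 * (#X : ℝ) ^ 2 ≤ edgeCount (G.induce (X : Set β)) := by
    rw [edgeCount_induce, ← Nat.card_coe_set_eq]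
    exact hG X hX
  linarith

theorem concaveOn_update_dotProduct_mulVec [DecidableEq β] {N : Matrix β β ℝ} {a : β}
    (ha : N a a ≤ 0) (f : β → ℝ) :
    ConcaveOn ℝ (Set.Icc 0 1) fun s =>
      Function.update f a s ⬝ᵥ N *ᵥ Function.update f a s := by
  set g := Function.update f a 0
  have hupdate : ∀ s : ℝ, Function.update f a s = g + s • Pi.single a 1 := fun s => by
    funext x
    rcases eq_or_ne x a with rfl | hx <;> simp [g, *]
  refine ⟨convex_Icc _ _, fun s _ t _ p q hp hq hpq => ?_⟩
  obtain rfl : q = 1 - p := by linarith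
  simp only [hupdate, mulVec_add, mulVec_smul, dotProduct_add, add_dotProduct, dotProduct_smul,
    smul_dotProduct, smul_eq_mul, mulVec_single_one, single_one_dotProduct, col_apply]
  nlinarith [mul_nonneg (mul_nonneg hp hq) (mul_nonneg (sq_nonneg (s - t)) (neg_nonneg.2 ha))]

-- The form `f ↦ f ⬝ᵥ A *ᵥ f - d * (∑ x, f x) ^ 2` has diagonal `-d`, so it is concave in each
-- coordinate and is minimized on the cube at an indicator function.
theorem LocallyDense.le_dotProduct_mulVec {G : SimpleGraph β} [DecidableRel G.Adj] {ρ d : ℝ}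
    (hG : LocallyDense G ρ d) (hd0 : 0 ≤ d) (hd1 : d ≤ 1) {f : β → ℝ}
    (hf : ∀ x, f x ∈ Set.Icc 0 1) :
    d * (∑ x, f x) ^ 2 - (ρ * Fintype.card β) ^ 2 ≤ f ⬝ᵥ G.adjMatrix ℝ *ᵥ f := by
  classical
  let N : Matrix β β ℝ := G.adjMatrix ℝ - Matrix.of fun _ _ => d
  have hN : ∀ g : β → ℝ, g ⬝ᵥ N *ᵥ g = g ⬝ᵥ G.adjMatrix ℝ *ᵥ g - d * (∑ x, g x) ^ 2 := fun g => by
    have hconst : g ⬝ᵥ (Matrix.of fun _ _ => d) *ᵥ g = d * (∑ x, g x) ^ 2 := by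
      simp only [dotProduct, mulVec, of_apply, ← mul_sum, ← sum_mul]
      ring
    rw [sub_mulVec, dotProduct_sub, hconst]
  obtain ⟨X, hX⟩ := exists_indicator_le_of_concaveOn_update (Q := fun g => g ⬝ᵥ N *ᵥ g)
    (fun g a => concaveOn_update_dotProduct_mulVec (N := N) (a := a) (by simpa [N] using hd0) g) hf
  have hedges : Set.indicator (X : Set β) 1 ⬝ᵥ G.adjMatrix ℝ *ᵥ Set.indicator (X : Set β) 1 =
      2 * edgeCount (G.induce (X : Set β)) := by
    rw [two_mul_edgeCount_induce]
    simp [dotProduct, mulVec, Set.indicator_apply]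
  have hcard : ∑ x, Set.indicator (X : Set β) (1 : β → ℝ) x = #X := by simp [Set.indicator_apply]
  rw [hN, hN, hedges, hcard] at hX
  suffices d * (#X : ℝ) ^ 2 - (ρ * Fintype.card β) ^ 2 ≤
      2 * edgeCount (G.induce (X : Set β)) by linarith
  rcases le_total (ρ * Fintype.card β) #X with hlarge | hsmall
  · linarith [hG.le_edgeCount_induce hlarge, sq_nonneg (ρ * Fintype.card β)]
  · have hsq : (#X : ℝ) ^ 2 ≤ (ρ * Fintype.card β) ^ 2 := by gcongr
    have hdsq := mul_le_of_le_one_left (sq_nonneg (#X : ℝ)) hd1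
    linarith [(edgeCount (G.induce (X : Set β))).cast_nonneg (α := ℝ)]

end LocalDensity

section CycleDensity

open Matrix

variable {β : Type*} [Fintype β]

theorem meanRowSum_mul_self {P : Matrix β β ℝ} (hP : P.IsSymm) :
    meanRowSum (P * P) = 𝔼 v, (∑ x, P v x) ^ 2 := by
  rw [meanRowSum, Fintype.expect_eq_sum_div_card, Fintype.expect_eq_sum_div_card]
  congr 1
  calc ∑ x, ∑ y, (P * P) x y = ∑ x, ∑ y, ∑ v, P v x * P v y := by
        simp only [mul_apply, hP.apply]
    _ = ∑ v, ∑ x, ∑ y, P v x * P v y := by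
        rw [sum_congr rfl fun x _ => sum_comm, sum_comm]
    _ = ∑ v, (∑ x, P v x) ^ 2 := by simp only [sq, sum_mul_sum]

theorem meanRowSum_mul_self_le_trace {P : Matrix β β ℝ} (hP : P.IsSymm) :
    meanRowSum (P * P) ≤ (P * P).trace := by
  rw [meanRowSum_mul_self hP, Fintype.expect_eq_sum_div_card, sum_div]
  refine sum_le_sum fun v _ => div_le_of_le_mul₀ (by positivity) ?_ ?_
  · rw [diag_apply, mul_apply]
    exact sum_nonneg fun x _ => by rw [hP.apply]; exact mul_self_nonneg _
  · calc (∑ x, P v x) ^ 2 ≤ Fintype.card β * ∑ x, P v x ^ 2 := sq_sum_le_card_mul_sum_sq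
      _ = (P * P).diag v * Fintype.card β := by
        simp only [diag_apply, mul_apply, hP.apply _ v, sq, mul_comm]

theorem LocallyDense.le_meanRowSum [Nonempty β] {G : SimpleGraph β} [DecidableRel G.Adj] {ρ d : ℝ}
    (hG : LocallyDense G ρ d) (hρ : ρ ≤ 1) : d ≤ meanRowSum (averagingMatrix (G.adjMatrix ℝ)) := by
  have hcard : (0 : ℝ) < Fintype.card β := by positivity
  have hedges := hG.le_edgeCount_induce (X := univ)
    (by rw [card_univ]; exact mul_le_of_le_one_left hcard.le hρ)
  rw [two_mul_edgeCount_induce, card_univ] at hedges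
  calc d ≤ (∑ x, ∑ y, G.adjMatrix ℝ x y) / (Fintype.card β : ℝ) ^ 2 :=
        (le_div_iff₀ (by positivity)).2 hedges
    _ = _ := by
        simp only [meanRowSum, averagingMatrix, Matrix.smul_apply, smul_eq_mul, ← mul_sum,
          Fintype.expect_eq_sum_div_card]
        field_simp

theorem LocallyDense.le_trace_mul_averagingMatrix [Nonempty β] {G : SimpleGraph β}
    [DecidableRel G.Adj] {ρ d : ℝ} (hG : LocallyDense G ρ d) (hd0 : 0 ≤ d) (hd1 : d ≤ 1)
    {P : Matrix β β ℝ} (hP : P.IsSymm) (hP01 : ∀ x y, Fintype.card β * P x y ∈ Set.Icc 0 1) :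
    d * meanRowSum (P * P) - ρ ^ 2 ≤ (P * P * averagingMatrix (G.adjMatrix ℝ)).trace := by
  set n : ℝ := (Fintype.card β : ℝ) with hn
  have hn0 : 0 < n := by positivity
  have hrow : ∀ v, d * (∑ x, P v x) ^ 2 - ρ ^ 2 ≤ P.row v ⬝ᵥ G.adjMatrix ℝ *ᵥ P.row v := fun v => by
    have hdense := hG.le_dotProduct_mulVec hd0 hd1 (f := n • P.row v) fun x => hP01 v x
    simp only [Pi.smul_apply, row_apply, smul_eq_mul, ← mul_sum, mulVec_smul, dotProduct_smul,
      smul_dotProduct, ← hn] at hdense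
    refine le_of_mul_le_mul_left ?_ (pow_pos hn0 2)
    linarith
  have htrace : (P * P * averagingMatrix (G.adjMatrix ℝ)).trace =
      𝔼 v, P.row v ⬝ᵥ G.adjMatrix ℝ *ᵥ P.row v := by
    rw [mul_assoc, trace_mul_comm, averagingMatrix, Matrix.mul_smul, Matrix.smul_mul, trace_smul,
      Fintype.expect_eq_sum_div_card, smul_eq_mul, ← hn, inv_mul_eq_div]
    congr 1
    refine sum_congr rfl fun v _ => ?_
    rw [dotProduct_mulVec, diag_apply, mul_apply', mul_apply_eq_vecMul]
    simp only [hP.apply]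
    rfl
  rw [htrace, meanRowSum_mul_self hP, mul_expect]
  calc _ = 𝔼 v, (d * (∑ x, P v x) ^ 2 - ρ ^ 2) := by
        rw [expect_sub_distrib, Fintype.expect_const]
    _ ≤ _ := expect_le_expect fun v _ => hrow v

variable [DecidableEq β]

theorem card_mul_averagingMatrix_pow_mem_Icc {A : Matrix β β ℝ}
    (hA : ∀ x y, A x y ∈ Set.Icc 0 1) (m : ℕ) (x y : β) :
    Fintype.card β * (averagingMatrix A ^ (m + 1)) x y ∈ Set.Icc 0 1 := by
  have : Nonempty β := ⟨x⟩
  induction m generalizing x with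
  | zero => simpa [averagingMatrix] using hA x y
  | succ m ih =>
    rw [pow_succ', averagingMatrix_mul_apply, mul_expect]
    have hterm : ∀ z, Fintype.card β * (A x z * (averagingMatrix A ^ (m + 1)) z y) ∈
        Set.Icc 0 1 := fun z => by
      rw [mul_left_comm]
      exact unitInterval.mul_mem (hA x z) (ih z)
    exact ⟨expect_nonneg fun z _ => (hterm z).1,
      expect_le univ_nonempty fun z _ => (hterm z).2⟩

theorem expect_prod_path_le {A : Matrix β β ℝ} (hA : ∀ x y, 0 ≤ A x y) {b : ℝ} (hb : 0 ≤ b)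
    {M : ℕ} (hAb : ∀ j ≤ M, meanRowSum (averagingMatrix A ^ j) ≤ b ^ j) {r : ℕ}
    (e : Fin r → Prop) [DecidablePred e] (he : #{i | e i} ≤ M) :
    𝔼 θ : Fin (r + 1) → β, ∏ i with e i, A (θ i.castSucc) (θ i.succ) ≤ b ^ #{i | e i} := by
  have hpath := expect_prod_path (fun i => if e i then A else Matrix.of 1) fun _ _ => 1
  have hbound := meanRowSum_pow_mul_listProd_le (A := averagingMatrix A)
    (fun x y => mul_nonneg (by positivity) (hA x y)) hb hAb e (j := 0) (by simpa using he)
  rw [pow_zero, one_mul, zero_add] at hbound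
  simp only [mul_one, apply_ite averagingMatrix] at hpath
  refine (le_of_eq ?_).trans hbound
  refine (expect_congr rfl fun θ _ => ?_).trans hpath
  rw [prod_filter]
  refine prod_congr rfl fun i _ => ?_
  split_ifs <;> rfl

theorem expect_prod_cycle_le_of_not_last {A : Matrix β β ℝ} (hA : ∀ x y, 0 ≤ A x y) {b : ℝ}
    (hb : 0 ≤ b) {M : ℕ} (hAb : ∀ j ≤ M, meanRowSum (averagingMatrix A ^ j) ≤ b ^ j) {r : ℕ}
    (e : Fin (r + 1) → Prop) [DecidablePred e] (hlast : ¬ e (Fin.last r)) (he : #{i | e i} ≤ M) :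
    𝔼 θ : Fin (r + 1) → β, ∏ i with e i, A (θ i) (θ (i + 1)) ≤ b ^ #{i | e i} := by
  have hcard : #{i | e i} = #{i : Fin r | e i.castSucc} := by
    simp only [card_filter, Fin.sum_univ_castSucc, hlast, if_false, add_zero]
  have hprod : ∀ θ : Fin (r + 1) → β, ∏ i with e i, A (θ i) (θ (i + 1)) =
      ∏ i : Fin r with e i.castSucc, A (θ i.castSucc) (θ i.succ) := fun θ => by
    simp [prod_filter, Fin.prod_univ_castSucc, hlast]
  rw [hcard] at he ⊢
  simp only [hprod]
  exact expect_prod_path_le hA hb hAb _ he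

theorem expect_prod_cycle_le {A : Matrix β β ℝ} (hA : ∀ x y, 0 ≤ A x y) {b : ℝ} (hb : 0 ≤ b)
    {M : ℕ} (hAb : ∀ j ≤ M, meanRowSum (averagingMatrix A ^ j) ≤ b ^ j) {r : ℕ}
    (e : Fin (r + 1) → Prop) [DecidablePred e] (hmissing : ∃ i, ¬ e i) (he : #{i | e i} ≤ M) :
    𝔼 θ : Fin (r + 1) → β, ∏ i with e i, A (θ i) (θ (i + 1)) ≤ b ^ #{i | e i} := by
  obtain ⟨i₀, hi₀⟩ := hmissing
  let σ : Equiv.Perm (Fin (r + 1)) := Equiv.addRight (i₀ + 1)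
  have hσ : ∀ i, σ (i + 1) = σ i + 1 := fun i => add_right_comm i 1 (i₀ + 1)
  have hσlast : σ (Fin.last r) = i₀ := by
    change Fin.last r + (i₀ + 1) = i₀
    rw [add_left_comm, Fin.last_add_one, add_zero]
  have hcard : #{i | e (σ i)} = #{i | e i} := by
    simpa only [card_filter] using Equiv.sum_comp σ fun i => if e i then 1 else 0
  have hprod : ∀ θ : Fin (r + 1) → β, ∏ i with e (σ i), A (θ (σ i)) (θ (σ (i + 1))) =
      ∏ i with e i, A (θ i) (θ (i + 1)) := fun θ => by
    simpa only [prod_filter, hσ] using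
      Equiv.prod_comp σ fun i => if e i then A (θ i) (θ (i + 1)) else 1
  rw [← hcard, Fintype.expect_equiv (σ.symm.arrowCongr (.refl β)) _
    (fun θ => ∏ i with e (σ i), A (θ i) (θ (i + 1))) fun θ => (hprod θ).symm]
  exact expect_prod_cycle_le_of_not_last hA hb hAb _ (by rwa [hσlast]) (by rwa [hcard])

theorem expect_prod_cycle (A : Matrix β β ℝ) (r : ℕ) :
    𝔼 θ : Fin (r + 1) → β, ∏ i, A (θ i) (θ (i + 1)) = (averagingMatrix A ^ (r + 1)).trace := by
  calc _ = 𝔼 θ : Fin (r + 1) → β, (∏ i : Fin r, A (θ i.castSucc) (θ i.succ)) *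
        A (θ (Fin.last r)) (θ 0) := by simp [Fin.prod_univ_castSucc]
    _ = 𝔼 x, ∑ y, (averagingMatrix A ^ r) x y * A y x := by
        rw [expect_prod_path (fun _ => A) fun x y => A y x]
        simp
    _ = _ := by
        rw [pow_succ, Fintype.expect_eq_sum_div_card, sum_div]
        refine sum_congr rfl fun x _ => ?_
        rw [diag_apply, mul_apply, sum_div]
        exact sum_congr rfl fun y _ => by simp [averagingMatrix, div_eq_inv_mul, mul_left_comm]

end CycleDensity

section Cycle

open Matrix SimpleGraph

variable {β : Type*} [Fintype β]

theorem cycleGraph_adj_iff_eq_add_one {r : ℕ} {u v : Fin (r + 2)} :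
    (cycleGraph (r + 2)).Adj u v ↔ v = u + 1 ∨ u = v + 1 := by
  rw [cycleGraph_adj, sub_eq_iff_eq_add', sub_eq_iff_eq_add', or_comm, add_comm u, add_comm v]

theorem edgeCount_induce_cycleGraph (r : ℕ) (S : Finset (Fin (r + 3))) :
    edgeCount ((cycleGraph (r + 3)).induce (S : Set (Fin (r + 3)))) =
      #{i | i ∈ S ∧ i + 1 ∈ S} := by
  have hinj : Function.Injective fun i : Fin (r + 3) => s(i, i + 1) := fun i j hij => by
    rcases Sym2.eq_iff.1 hij with ⟨h, -⟩ | ⟨h₁, h₂⟩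
    · exact h
    · rw [h₁, add_assoc, add_eq_left] at h₂
      simp [Fin.ext_iff, Fin.val_add, Nat.mod_eq_of_lt (show 2 < r + 3 by omega)] at h₂
  rw [edgeCount_induce, ← Set.ncard_coe_finset, ← Set.ncard_image_of_injective _ hinj]
  congr 1
  ext e
  induction e with
  | h u v =>
    simp only [Set.mem_ofPred_eq, mem_edgeSet, cycleGraph_adj_iff_eq_add_one, Sym2.mem_iff,
      forall_eq_or_imp, forall_eq, mem_coe, coe_filter, mem_univ, true_and, Set.mem_image]
    constructor
    · rintro ⟨rfl | rfl, hu, hv⟩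
      · exact ⟨u, ⟨hu, hv⟩, rfl⟩
      · exact ⟨v, ⟨hv, hu⟩, Sym2.eq_swap⟩
    · rintro ⟨i, ⟨hi, hi'⟩, hiuv⟩
      rcases Sym2.eq_iff.1 hiuv with ⟨rfl, rfl⟩ | ⟨rfl, rfl⟩
      · exact ⟨.inl rfl, hi, hi'⟩
      · exact ⟨.inr rfl, hi', hi⟩

theorem edgeCount_cycleGraph {k : ℕ} (hk : 3 ≤ k) : edgeCount (cycleGraph k) = k := by
  obtain ⟨r, rfl⟩ : ∃ r, k = r + 3 := ⟨k - 3, by omega⟩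
  rw [← edgeCount_congr (induceUnivIso _), ← coe_univ, edgeCount_induce_cycleGraph]
  simp

theorem mem_homsOn_cycleGraph {r : ℕ} {G : SimpleGraph β} {S : Finset (Fin (r + 2))}
    {θ : Fin (r + 2) → β} : θ ∈ homsOn (cycleGraph (r + 2)) G S ↔
      ∀ i, i ∈ S ∧ i + 1 ∈ S → G.Adj (θ i) (θ (i + 1)) := by
  simp only [mem_homsOn, cycleGraph_adj_iff_eq_add_one]
  constructor
  · exact fun h i hi => h i hi.1 _ hi.2 (.inl rfl)
  · rintro h u hu v hv (rfl | rfl)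
    · exact h u ⟨hu, hv⟩
    · exact (h v ⟨hv, hu⟩).symm

theorem dens_homsOn_cycleGraph {r : ℕ} (G : SimpleGraph β) [DecidableRel G.Adj]
    (S : Finset (Fin (r + 2))) : ((homsOn (cycleGraph (r + 2)) G S).dens : ℝ) =
      𝔼 θ : Fin (r + 2) → β,
        ∏ i with i ∈ S ∧ i + 1 ∈ S, G.adjMatrix ℝ (θ i) (θ (i + 1)) := by
  classical
  rw [← expect_indicator_one]
  refine expect_congr rfl fun θ _ => ?_
  simp only [adjMatrix_apply, prod_boole, mem_filter, mem_univ, true_and, Set.indicator_apply,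
    mem_coe, mem_homsOn_cycleGraph, Pi.one_apply]

theorem homDensity_cycleGraph [DecidableEq β] (r : ℕ) (G : SimpleGraph β) [DecidableRel G.Adj] :
    homDensity (cycleGraph (r + 2)) G = (averagingMatrix (G.adjMatrix ℝ) ^ (r + 2)).trace := by
  rw [homDensity_eq_dens_homsOn_univ, dens_homsOn_cycleGraph, ← expect_prod_cycle]
  simp

theorem homDensity_induce_cycleGraph_le [Nonempty β] [DecidableEq β] {r : ℕ} {G : SimpleGraph β}
    [DecidableRel G.Adj] {b : ℝ} (hb : 0 ≤ b) {M : ℕ}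
    (hGb : ∀ j ≤ M, meanRowSum (averagingMatrix (G.adjMatrix ℝ) ^ j) ≤ b ^ j)
    {S : Finset (Fin (r + 2))} (hS : S ≠ univ) (hSM : #{i | i ∈ S ∧ i + 1 ∈ S} ≤ M) :
    homDensity ((cycleGraph (r + 2)).induce (S : Set (Fin (r + 2)))) G ≤
      b ^ #{i | i ∈ S ∧ i + 1 ∈ S} := by
  obtain ⟨i, hi⟩ : ∃ i, i ∉ S := by simpa [eq_univ_iff_forall] using hS
  rw [homDensity_induce, dens_homsOn_cycleGraph]
  refine expect_prod_cycle_le (fun x y => ?_) hb hGb _ ⟨i, fun h => hi h.1⟩ hSM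
  rw [adjMatrix_apply]
  positivity

variable [Nonempty β] {G : SimpleGraph β} {ρ d δ : ℝ} {k : ℕ}

-- Even cycles satisfy a Cauchy–Schwarz bound in every graph; the closing edge of an odd cycle is
-- paid for by local density, applied to the endpoint distribution of walks of half the length.
theorem LocallyDense.exists_pow_mul_pow_le_trace [DecidableEq β] [DecidableRel G.Adj]
    (hG : LocallyDense G ρ d) (hρ : ρ ≤ 1) (hd1 : d ≤ 1) (hδ : 0 < δ) (hδd : δ ≤ d)
    (hρδ : ρ ^ 2 ≤ (d - δ) * d ^ (k - 1)) (hk : 3 ≤ k) :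
    ∃ (M : ℕ) (b : ℝ), k ≤ M + 1 ∧ M ≤ k ∧ δ ≤ b ∧
      (∀ j ≤ M, meanRowSum (averagingMatrix (G.adjMatrix ℝ) ^ j) ≤ b ^ j) ∧
      δ ^ (k - M) * b ^ M ≤ (averagingMatrix (G.adjMatrix ℝ) ^ k).trace := by
  set W := averagingMatrix (G.adjMatrix ℝ) with hWdef
  have hW : W.IsSymm := G.isSymm_adjMatrix.smul _
  have hWH : W.IsHermitian := by rwa [IsHermitian, conjTranspose_eq_transpose_of_trivial]
  have hd : d ≤ meanRowSum W := hG.le_meanRowSum hρ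
  obtain ⟨m, hkm⟩ := k.even_or_odd'
  obtain ⟨b, -, hbM, hbj⟩ := exists_meanRowSum_pow_le hWH (even_two_mul m) (by omega)
  have hdb : d ≤ b := by simpa using hd.trans (by simpa using hbj 1 (by omega))
  have hsq : W ^ (2 * m) = W ^ m * W ^ m := by rw [two_mul, pow_add]
  refine ⟨2 * m, b, by omega, by omega, hδd.trans hdb, hbj, ?_⟩
  rw [← hbM]
  rcases hkm with rfl | rfl
  · rw [Nat.sub_self, pow_zero, one_mul, hsq]
    exact meanRowSum_mul_self_le_trace (hW.pow m)
  · obtain ⟨l, rfl⟩ : ∃ l, m = l + 1 := ⟨m - 1, by omega⟩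
    have hodd := hG.le_trace_mul_averagingMatrix (hδ.le.trans hδd) hd1 (hW.pow (l + 1))
      (card_mul_averagingMatrix_pow_mem_Icc (fun x y => by
        rw [adjMatrix_apply]; split_ifs <;> simp) l)
    rw [← hWdef, ← hsq, ← pow_succ] at hodd
    have herror : ρ ^ 2 ≤ (d - δ) * meanRowSum (W ^ (2 * (l + 1))) := by
      rw [hbM]
      exact hρδ.trans (mul_le_mul_of_nonneg_left
        (pow_le_pow_left₀ (hδ.le.trans hδd) hdb _) (sub_nonneg.2 hδd))
    rw [Nat.add_sub_cancel_left, pow_one]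
    linarith

theorem LocallyDense.isInducedSidorenko_cycleGraph (hG : LocallyDense G ρ d) (hρ : ρ ≤ 1)
    (hd1 : d ≤ 1) (hδ : 0 < δ) (hδd : δ ≤ d) (hρδ : ρ ^ 2 ≤ (d - δ) * d ^ (k - 1)) (hk : 3 ≤ k) :
    IsInducedSidorenko δ (cycleGraph k) G := fun S => by
  classical
  obtain ⟨r, rfl⟩ : ∃ r, k = r + 3 := ⟨k - 3, by omega⟩
  rcases eq_or_ne S univ with rfl | hS
  · have e : (cycleGraph (r + 3)).induce ((univ : Finset (Fin (r + 3))) : Set (Fin (r + 3))) ≃g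
        cycleGraph (r + 3) := by
      rw [coe_univ]
      exact induceUnivIso _
    rw [homDensity_congr e, edgeCount_congr e]
  obtain ⟨M, b, hkM, hMk, hδb, hGb, htrace⟩ :=
    hG.exists_pow_mul_pow_le_trace hρ hd1 hδ hδd hρδ hk
  rw [edgeCount_cycleGraph hk, edgeCount_induce_cycleGraph, homDensity_cycleGraph (r + 1)]
  set c := #{i | i ∈ S ∧ i + 1 ∈ S}
  have hcM : c ≤ M := by
    obtain ⟨i, hi⟩ : ∃ i, i ∉ S := by simpa [eq_univ_iff_forall] using hS
    have hlt : c < #(univ : Finset (Fin (r + 3))) :=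
      card_lt_card (filter_ssubset.2 ⟨i, mem_univ i, fun h => hi h.1⟩)
    rw [card_univ, Fintype.card_fin] at hlt
    omega
  have hb : 0 ≤ b := hδ.le.trans hδb
  calc _ ≤ δ ^ (r + 3) * b ^ c := by
        gcongr
        exact homDensity_induce_cycleGraph_le hb hGb hS hcM
    _ = δ ^ c * (δ ^ (r + 3 - M) * (δ ^ (M - c) * b ^ c)) := by
        simp only [← mul_assoc, ← pow_add]
        congr 2
        omega
    _ ≤ δ ^ c * (δ ^ (r + 3 - M) * (b ^ (M - c) * b ^ c)) := by gcongr
    _ = δ ^ c * (δ ^ (r + 3 - M) * b ^ M) := by rw [← pow_add, Nat.sub_add_cancel hcM]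
    _ ≤ _ := by gcongr

theorem LocallyDense.isInducedSidorenko_sub_cycleGraph {ε : ℝ} (hG : LocallyDense G (ε ^ k) d)
    (hε : 0 < ε) (hεd : ε < d) (hd1 : d ≤ 1) (hk : 3 ≤ k) :
    IsInducedSidorenko (d - ε) (cycleGraph k) G := by
  have hρ : ε ^ k ≤ 1 := pow_le_one₀ hε.le (hεd.le.trans hd1)
  refine hG.isInducedSidorenko_cycleGraph hρ hd1 (sub_pos.2 hεd) (sub_le_self d hε.le) ?_ hk
  calc (ε ^ k) ^ 2 ≤ ε ^ k := pow_le_of_le_one (by positivity) hρ two_ne_zero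
    _ = ε * ε ^ (k - 1) := (mul_pow_sub_one (by omega) ε).symm
    _ ≤ ε * d ^ (k - 1) := by gcongr
    _ = (d - (d - ε)) * d ^ (k - 1) := by rw [sub_sub_cancel]

end Cycle

theorem homDensity_nonneg {α β : Type*} [Fintype α] [Fintype β] (H : SimpleGraph α)
    (G : SimpleGraph β) : 0 ≤ homDensity H G := by
  rw [homDensity]
  positivity

theorem IsJDecomp.edgeCount_le {α ι γ : Type*} [Finite α] [DecidableEq α] {H : SimpleGraph α}
    {J : SimpleGraph γ} {bag : ι → Finset α} {T : SimpleGraph ι} (hH : IsJDecomp H J bag T) :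
    edgeCount J ≤ edgeCount H := by
  obtain ⟨X⟩ := hH.1.1.connected.nonempty
  obtain ⟨e⟩ := hH.2.1 X
  rw [← edgeCount_congr e, ← edgeCount_congr (SimpleGraph.induceUnivIso H)]
  exact edgeCount_induce_mono H (Set.subset_univ _)

theorem pow_sub_mul_le_sub_pow {d ε : ℝ} (hε : 0 ≤ ε) (hεd : ε ≤ d) (hd1 : d ≤ 1) (n : ℕ) :
    d ^ n - n * ε ≤ (d - ε) ^ n := by
  have hd0 := hε.trans hεd
  have habs := abs_pow_sub_pow_le d (d - ε) n
  rw [sub_sub_cancel, abs_of_nonneg hε, abs_of_nonneg hd0, abs_of_nonneg (sub_nonneg.2 hεd),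
    max_eq_left (sub_le_self d hε)] at habs
  have hbound : ε * n * d ^ (n - 1) ≤ ε * n :=
    mul_le_of_le_one_right (by positivity) (pow_le_one₀ hd0 hd1)
  linarith [le_abs_self (d ^ n - (d - ε) ^ n)]

theorem stmt3 {α : Type*} [Fintype α] [DecidableEq α] (k : ℕ) (hk : 3 ≤ k)
    (H : SimpleGraph α)
    (hH : JDecomposable H (SimpleGraph.cycleGraph k))
    (η : ℝ) (hη : 0 < η) :
    ∃ (ρ : ℝ) (n₀ : ℕ), 0 < ρ ∧
      ∀ (d : ℝ), 0 < d → d ≤ 1 →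
        ∀ (β : Type) [Fintype β] (G : SimpleGraph β),
          n₀ ≤ Fintype.card β → LocallyDense G ρ d →
            homDensity H G ≥ d ^ edgeCount H - η := by
  obtain ⟨ι, _, bag, T, hT⟩ := hH
  have hkE : k ≤ edgeCount H := by simpa [edgeCount_cycleGraph hk] using hT.edgeCount_le
  let ε := min 1 (η / edgeCount H)
  have hE1 : (1 : ℝ) ≤ edgeCount H := by exact_mod_cast (by omega : 1 ≤ edgeCount H)
  have hε : 0 < ε := by positivity
  have hεη : edgeCount H * ε ≤ η := (le_div_iff₀' (by linarith)).1 (min_le_right _ _)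
  refine ⟨ε ^ k, 1, pow_pos hε k, fun d hd0 hd1 β _ G hn hG => ?_⟩
  have : Nonempty β := Fintype.card_pos_iff.1 hn
  rcases le_or_gt d ε with hdε | hεd
  · have hdE : d ^ edgeCount H ≤ d := pow_le_of_le_one hd0.le hd1 (by omega)
    linarith [homDensity_nonneg H G, le_mul_of_one_le_left hε.le hE1]
  · have hcycle := hG.isInducedSidorenko_sub_cycleGraph hε hεd hd1 hk
    linarith [hT.pow_edgeCount_le_homDensity (sub_pos.2 hεd) (by linarith) hcycle,
      pow_sub_mul_le_sub_pow hε.le hεd.le hd1 (edgeCount H)]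
end

section
/- Let (X₁, X₂) and (X₂′, X₃) be random vectors taking values in finite sets S₁ × S₂ and S₂ × S₃ respectively. If X₂ and X₂′ are identically distributed, then there exists a random vector (Y₁, Y₂, Y₃) taking values in S₁ × S₂ × S₃ such that Y₁ and Y₃ are conditionally independent given Y₂, the pair (Y₁, Y₂) is identically distributed with (X₁, X₂), and the pair (Y₂, Y₃) is identically distributed with (X₂′, X₃). -/
open MeasureTheory

/-- Two finite-valued random variables (on possibly different probability spaces)
are identically distributed. -/
def IdentDistribFin {Ω₁ Ω₂ S : Type*} [MeasurableSpace Ω₁] [MeasurableSpace Ω₂]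
    (μ₁ : Measure Ω₁) (μ₂ : Measure Ω₂) (X : Ω₁ → S) (Y : Ω₂ → S) : Prop :=
  ∀ s : S, μ₁ (X ⁻¹' {s}) = μ₂ (Y ⁻¹' {s})

/-- The Shannon entropy (base 2) of a finite-valued random variable. -/
noncomputable def shannonEntropy {Ω S : Type*} [MeasurableSpace Ω] [Fintype S]
    (μ : Measure Ω) (X : Ω → S) : ℝ :=
  -∑ s : S, (μ (X ⁻¹' {s})).toReal * Real.logb 2 (μ (X ⁻¹' {s})).toReal

/-
Draw `ω` from `μ` and, independently, for every value `b` a sample `f b` from the conditional law of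
`Ω'` given `X₂' = b`. Then `(X₁ ω, X₂ ω, X₃ (f (X₂ ω)))` is the required vector, since
`P(Y₁ ∈ A, Y₂ = b, Y₃ ∈ C) = P(X₁ ∈ A, X₂ = b) P(X₃ ∈ C | X₂' = b)`.

The random variables need not be measurable, so every probability here is an outer measure. Three
facts make the argument survive: the outer measure induced on an arbitrary subset comes from a
measure there (the trace), product measures are multiplicative on arbitrary rectangles, and the
outer law of a variable depends only on the measurable hulls of its events.
-/

universe u w

section TraceMeasure

variable {α : Type u} [MeasurableSpace α]

theorem le_caratheodory_comap_val (μ : Measure α) (E : Set α) :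
    Subtype.instMeasurableSpace ≤
      (OuterMeasure.comap (Subtype.val : E → α) μ.toOuterMeasure).caratheodory := by
  rintro _ ⟨F, hF, rfl⟩
  refine (OuterMeasure.isCaratheodory_iff _).2 fun t => ?_
  simp only [OuterMeasure.comap_apply, Measure.coe_toOuterMeasure, Set.image_inter_preimage,
    Set.image_sdiff_preimage]
  exact (measure_inter_add_sdiff _ hF).symm

/-- The trace of `μ` on an arbitrary set `E`: the measure on the subtype `E` induced by the outer
measure of `μ`. `Measure.comap` cannot be used here: unless the traces on `E` of measurable sets are
null-measurable, it is `0`. -/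
noncomputable def traceMeasure (μ : Measure α) (E : Set α) : Measure E :=
  (OuterMeasure.comap (Subtype.val : E → α) μ.toOuterMeasure).toMeasure
    (le_caratheodory_comap_val μ E)

theorem traceMeasure_apply (μ : Measure α) (E : Set α) (A : Set E) :
    traceMeasure μ E A = μ (Subtype.val '' A) := by
  refine le_antisymm ?_ (le_toMeasure_apply _ (le_caratheodory_comap_val μ E) A)
  let F := toMeasurable μ (Subtype.val '' A)
  have hF : MeasurableSet ((Subtype.val : E → α) ⁻¹' F) :=
    measurable_subtype_coe (measurableSet_toMeasurable _ _)
  calc traceMeasure μ E A ≤ traceMeasure μ E (Subtype.val ⁻¹' F) :=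
        measure_mono (Set.image_subset_iff.1 (subset_toMeasurable _ _))
    _ = μ (Subtype.val '' (Subtype.val ⁻¹' F : Set E)) := toMeasure_apply _ _ hF
    _ ≤ μ F := measure_mono (Set.image_preimage_subset _ _)
    _ = μ (Subtype.val '' A) := measure_toMeasurable _

theorem exists_conditional_copy (μ : Measure α) [IsProbabilityMeasure μ] {S : Type*}
    (E : Set α) (X : α → S) :
    ∃ (Ω : Type u) (_ : MeasurableSpace Ω) (κ : Measure Ω) (_ : IsProbabilityMeasure κ)
      (Z : Ω → S), ∀ C : Set S, μ E * κ (Z ⁻¹' C) = μ (E ∩ X ⁻¹' C) := by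
  by_cases hE : μ E = 0
  · exact ⟨α, _, μ, inferInstance, X, fun C => by
      rw [hE, zero_mul, measure_mono_null Set.inter_subset_left hE]⟩
  · have huniv : traceMeasure μ E Set.univ = μ E := by
      rw [traceMeasure_apply, Set.image_univ, Subtype.range_coe]
    refine ⟨E, _, (μ E)⁻¹ • traceMeasure μ E, ⟨?_⟩, fun x => X x, fun C => ?_⟩
    · rw [Measure.smul_apply, huniv, smul_eq_mul, ENNReal.inv_mul_cancel hE (measure_ne_top _ _)]
    · have himage : Subtype.val '' ((fun x : E => X x) ⁻¹' C) = E ∩ X ⁻¹' C :=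
        Subtype.image_preimage_coe E (X ⁻¹' C)
      rw [Measure.smul_apply, traceMeasure_apply, himage, smul_eq_mul,
        ENNReal.mul_inv_cancel_left hE (measure_ne_top _ _)]

end TraceMeasure

section HullSpace

/-- A point `z.2 : S` together with a family `z.1` of events containing every event that holds at
that point. Only the family is observable: the σ-algebra is pulled back from the first coordinate.
It is the canonical space carrying a not necessarily measurable `S`-valued variable, `z.1` being the
family of events whose measurable hull is hit. -/
def HullSpace (S : Type w) : Type w :=
  {z : Set (Set S) × S // ∀ B, z.2 ∈ B → B ∈ z.1}

instance HullSpace.instMeasurableSpace (S : Type w) : MeasurableSpace (HullSpace S) :=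
  MeasurableSpace.comap (fun z => z.1.1) inferInstance

variable {M : Type*} [MeasurableSpace M] {S : Type w}

/-- The map through which a variable `X : M → S` factors, sending `x` to `X x` together with the
events `X ∈ B` whose measurable hull contains `x`. -/
def hullMap (μ : Measure M) (X : M → S) (x : M) : HullSpace S :=
  ⟨({B | x ∈ toMeasurable μ (X ⁻¹' B)}, X x), fun B hB => subset_toMeasurable μ (X ⁻¹' B) hB⟩

theorem measurable_hullMap (μ : Measure M) (X : M → S) : Measurable (hullMap μ X) :=
  measurable_comap_iff.2 <| measurable_set_iff.2 fun B =>
    measurable_mem.2 (measurableSet_toMeasurable μ (X ⁻¹' B))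

theorem map_hullMap_apply (μ : Measure M) (X : M → S) (B : Set S) :
    μ.map (hullMap μ X) ((fun z => z.1.2) ⁻¹' B) = μ (X ⁻¹' B) := by
  refine le_antisymm ?_ (Measure.le_map_apply (measurable_hullMap μ X).aemeasurable _)
  have hB : MeasurableSet {z : HullSpace S | B ∈ z.1.1} :=
    ⟨{p | B ∈ p}, measurableSet_setOfPred.2 (measurable_set_mem B), rfl⟩
  calc μ.map (hullMap μ X) ((fun z => z.1.2) ⁻¹' B)
      ≤ μ.map (hullMap μ X) {z | B ∈ z.1.1} := measure_mono fun z hz => z.2 B hz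
    _ = μ (toMeasurable μ (X ⁻¹' B)) := Measure.map_apply (measurable_hullMap μ X) hB
    _ = μ (X ⁻¹' B) := measure_toMeasurable _

theorem exists_copy_of_small {S : Type*} [Small.{w} S] (μ : Measure M) [IsProbabilityMeasure μ]
    (X : M → S) :
    ∃ (Ω : Type w) (_ : MeasurableSpace Ω) (ν : Measure Ω) (_ : IsProbabilityMeasure ν)
      (Y : Ω → S), ∀ B : Set S, ν (Y ⁻¹' B) = μ (X ⁻¹' B) := by
  let X' : M → Shrink.{w} S := equivShrink S ∘ X
  refine ⟨HullSpace (Shrink.{w} S), _, μ.map (hullMap μ X'),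
    Measure.isProbabilityMeasure_map (measurable_hullMap μ X').aemeasurable,
    fun z => (equivShrink S).symm z.1.2, fun B => ?_⟩
  refine (map_hullMap_apply μ X' ((equivShrink S).symm ⁻¹' B)).trans (congrArg μ ?_)
  ext x
  simp [X']

end HullSpace

section Gluing

variable {ι : Type*} {Ω' : ι → Type*} [∀ i, MeasurableSpace (Ω' i)]
  (κ : ∀ i, Measure (Ω' i)) [∀ i, IsProbabilityMeasure (κ i)]

theorem map_update_infinitePi_prod [DecidableEq ι] (i : ι) :
    ((Measure.infinitePi κ).prod (κ i)).map (fun p => Function.update p.1 i p.2) =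
      Measure.infinitePi κ := by
  refine Measure.eq_infinitePi κ fun s t ht => ?_
  have hbox : (fun p : (∀ j, Ω' j) × Ω' i => Function.update p.1 i p.2) ⁻¹' (s : Set ι).pi t =
      (↑(s.erase i) : Set ι).pi t ×ˢ (if i ∈ s then t i else Set.univ) := by
    ext p
    simp only [Set.mem_preimage, Set.mem_pi, Set.mem_prod, Finset.mem_coe, Finset.mem_erase]
    constructor
    · refine fun h => ⟨fun j hj => by simpa [hj.1] using h j hj.2, ?_⟩
      split_ifs with hi
      · simpa using h i hi
      · trivial
    · rintro ⟨hne, hi⟩ j hj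
      by_cases hji : j = i
      · subst hji
        simpa [hj] using hi
      · simpa [hji] using hne j ⟨hji, hj⟩
  rw [Measure.map_apply measurable_update' (.pi s.countable_toSet fun j _ => ht j), hbox,
    Measure.prod_prod, Measure.infinitePi_pi κ fun j _ => ht j]
  split_ifs with hi
  · exact Finset.prod_erase_mul s _ hi
  · rw [measure_univ, mul_one, Finset.erase_eq_of_notMem hi]

-- `C` need not be measurable, so evaluation being measure preserving gives only `≤`. For `≥`,
-- resampling the coordinate `i` independently turns the cylinder into a rectangle.
theorem infinitePi_eval_preimage (i : ι) (C : Set (Ω' i)) :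
    Measure.infinitePi κ (Function.eval i ⁻¹' C) = κ i C := by
  classical
  apply le_antisymm
  · calc Measure.infinitePi κ (Function.eval i ⁻¹' C)
        ≤ (Measure.infinitePi κ).map (Function.eval i) C :=
          Measure.le_map_apply (measurable_pi_apply i).aemeasurable C
      _ = κ i C := by rw [Measure.infinitePi_map_eval]
  · calc κ i C = ((Measure.infinitePi κ).prod (κ i)) (Set.univ ×ˢ C) := by
          rw [Measure.prod_prod, measure_univ, one_mul]
      _ = ((Measure.infinitePi κ).prod (κ i))
            ((fun p => Function.update p.1 i p.2) ⁻¹' (Function.eval i ⁻¹' C)) := by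
          congr 1
          ext p
          simp
      _ ≤ ((Measure.infinitePi κ).prod (κ i)).map (fun p => Function.update p.1 i p.2)
            (Function.eval i ⁻¹' C) := Measure.le_map_apply measurable_update'.aemeasurable _
      _ = Measure.infinitePi κ (Function.eval i ⁻¹' C) := by rw [map_update_infinitePi_prod]

variable {Ω S₁ S₃ : Type*} [MeasurableSpace Ω]

/-- The glued random vector on `Ω × ∀ i, Ω' i`: the third component is read off the sample indexed
by the value of the second. -/
def glue (X₁ : Ω → S₁) (X₂ : Ω → ι) (Z : ∀ i, Ω' i → S₃) (p : Ω × ∀ i, Ω' i) : S₁ × ι × S₃ :=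
  (X₁ p.1, X₂ p.1, Z (X₂ p.1) (p.2 (X₂ p.1)))

theorem prod_infinitePi_glue_preimage (μ : Measure Ω) [SFinite μ]
    (X₁ : Ω → S₁) (X₂ : Ω → ι) (Z : ∀ i, Ω' i → S₃) (A : Set S₁) (i : ι) (C : Set S₃) :
    (μ.prod (Measure.infinitePi κ)) (glue X₁ X₂ Z ⁻¹' (A ×ˢ {i} ×ˢ C)) =
      μ (X₁ ⁻¹' A ∩ X₂ ⁻¹' {i}) * κ i (Z i ⁻¹' C) := by
  have hrect : glue X₁ X₂ Z ⁻¹' (A ×ˢ {i} ×ˢ C) =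
      (X₁ ⁻¹' A ∩ X₂ ⁻¹' {i}) ×ˢ (Function.eval i ⁻¹' (Z i ⁻¹' C)) := by
    ext ⟨ω, f⟩
    constructor
    · rintro ⟨hA, rfl, hC⟩
      exact ⟨⟨hA, rfl⟩, hC⟩
    · rintro ⟨⟨hA, rfl⟩, hC⟩
      exact ⟨hA, rfl, hC⟩
  rw [hrect, Measure.prod_prod, infinitePi_eval_preimage]

end Gluing

section Coupling

variable {Ω Ω' S₁ S₂ S₃ : Type*} [MeasurableSpace Ω] [MeasurableSpace Ω']

theorem identDistribFin_prodMk_iff {μ : Measure Ω} {μ' : Measure Ω'} {X₁ : Ω → S₁} {X₂ : Ω → S₂}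
    {Y₁ : Ω' → S₁} {Y₂ : Ω' → S₂} :
    IdentDistribFin μ μ' (fun ω => (X₁ ω, X₂ ω)) (fun ω => (Y₁ ω, Y₂ ω)) ↔
      ∀ a b, μ (X₁ ⁻¹' {a} ∩ X₂ ⁻¹' {b}) = μ' (Y₁ ⁻¹' {a} ∩ Y₂ ⁻¹' {b}) := by
  simp only [IdentDistribFin, Prod.forall, ← Set.singleton_prod_singleton, Set.mk_preimage_prod]

theorem exists_glued_copy [Small.{w} S₁] [Small.{w} S₂] [Small.{w} S₃]
    (μ : Measure Ω) [IsProbabilityMeasure μ] (X₁ : Ω → S₁) (X₂ : Ω → S₂)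
    (μ' : Measure Ω') [IsProbabilityMeasure μ'] (X₂' : Ω' → S₂) (X₃ : Ω' → S₃) :
    ∃ (Ω'' : Type w) (_ : MeasurableSpace Ω'') (ν : Measure Ω'') (_ : IsProbabilityMeasure ν)
      (Y₁ : Ω'' → S₁) (Y₂ : Ω'' → S₂) (Y₃ : Ω'' → S₃) (q : S₂ → Set S₃ → ENNReal),
      (∀ b, q b Set.univ = 1) ∧
      (∀ b C, μ' (X₂' ⁻¹' {b}) * q b C = μ' (X₂' ⁻¹' {b} ∩ X₃ ⁻¹' C)) ∧
      ∀ A b C, ν (Y₁ ⁻¹' A ∩ Y₂ ⁻¹' {b} ∩ Y₃ ⁻¹' C) = μ (X₁ ⁻¹' A ∩ X₂ ⁻¹' {b}) * q b C := by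
  choose Ωc _ κ _ Z hκ using fun b => exists_conditional_copy μ' (X₂' ⁻¹' {b}) X₃
  obtain ⟨Ω'', _, ν, hν, Y, hY⟩ :=
    exists_copy_of_small.{w} (μ.prod (Measure.infinitePi κ)) (glue X₁ X₂ Z)
  refine ⟨Ω'', _, ν, hν, fun ω => (Y ω).1, fun ω => (Y ω).2.1, fun ω => (Y ω).2.2,
    fun b C => κ b (Z b ⁻¹' C), fun b => measure_univ, hκ, fun A b C => ?_⟩
  rw [← prod_infinitePi_glue_preimage, ← hY, Set.inter_assoc]
  rfl

theorem stmt5_general [Small.{w} S₁] [Small.{w} S₂] [Small.{w} S₃]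
    (μ : Measure Ω) [IsProbabilityMeasure μ] (μ' : Measure Ω') [IsProbabilityMeasure μ']
    (X₁ : Ω → S₁) (X₂ : Ω → S₂) (X₂' : Ω' → S₂) (X₃ : Ω' → S₃)
    (h : IdentDistribFin μ μ' X₂ X₂') :
    ∃ (Ω'' : Type w) (_ : MeasurableSpace Ω'') (ν : Measure Ω'') (_ : IsProbabilityMeasure ν)
      (Y₁ : Ω'' → S₁) (Y₂ : Ω'' → S₂) (Y₃ : Ω'' → S₃),
      (∀ (A : Set S₁) (b : S₂) (C : Set S₃),
        ν (Y₁ ⁻¹' A ∩ Y₂ ⁻¹' {b} ∩ Y₃ ⁻¹' C) * ν (Y₂ ⁻¹' {b}) =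
          ν (Y₁ ⁻¹' A ∩ Y₂ ⁻¹' {b}) * ν (Y₃ ⁻¹' C ∩ Y₂ ⁻¹' {b})) ∧
      (∀ (A : Set S₁) (b : S₂),
        ν (Y₁ ⁻¹' A ∩ Y₂ ⁻¹' {b}) = μ (X₁ ⁻¹' A ∩ X₂ ⁻¹' {b})) ∧
      ∀ (b : S₂) (C : Set S₃), ν (Y₂ ⁻¹' {b} ∩ Y₃ ⁻¹' C) = μ' (X₂' ⁻¹' {b} ∩ X₃ ⁻¹' C) := by
  obtain ⟨Ω'', _, ν, hν, Y₁, Y₂, Y₃, q, hq_univ, hq, hjoint⟩ :=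
    exists_glued_copy.{w} μ X₁ X₂ μ' X₂' X₃
  have h₁₂ (A b) : ν (Y₁ ⁻¹' A ∩ Y₂ ⁻¹' {b}) = μ (X₁ ⁻¹' A ∩ X₂ ⁻¹' {b}) := by
    simpa [hq_univ] using hjoint A b Set.univ
  have h₂ (b) : ν (Y₂ ⁻¹' {b}) = μ (X₂ ⁻¹' {b}) := by
    simpa using h₁₂ Set.univ b
  have h₂₃ (b C) : ν (Y₂ ⁻¹' {b} ∩ Y₃ ⁻¹' C) = μ (X₂ ⁻¹' {b}) * q b C := by
    simpa using hjoint Set.univ b C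
  refine ⟨Ω'', _, ν, hν, Y₁, Y₂, Y₃, fun A b C => ?_, h₁₂, fun b C => ?_⟩
  · rw [hjoint, Set.inter_comm (Y₃ ⁻¹' C), h₂₃, h₁₂, h₂, mul_assoc, mul_comm (q b C)]
  · rw [h₂₃, h b, hq]

end Coupling

theorem stmt5 {S₁ S₂ S₃ : Type*} [Fintype S₁] [Fintype S₂] [Fintype S₃]
    {Ω : Type*} [MeasurableSpace Ω] (μ : Measure Ω) [IsProbabilityMeasure μ]
    {Ω' : Type*} [MeasurableSpace Ω'] (μ' : Measure Ω') [IsProbabilityMeasure μ']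
    (X₁ : Ω → S₁) (X₂ : Ω → S₂) (X₂' : Ω' → S₂) (X₃ : Ω' → S₃)
    (h : IdentDistribFin μ μ' X₂ X₂') :
    ∃ (Ω'' : Type) (_ : MeasurableSpace Ω'') (ν : Measure Ω'')
      (_ : IsProbabilityMeasure ν)
      (Y₁ : Ω'' → S₁) (Y₂ : Ω'' → S₂) (Y₃ : Ω'' → S₃),
      (∀ (s₁ : S₁) (s₂ : S₂) (s₃ : S₃), ν (Y₂ ⁻¹' {s₂}) ≠ 0 →
        ν (Y₁ ⁻¹' {s₁} ∩ Y₂ ⁻¹' {s₂} ∩ Y₃ ⁻¹' {s₃}) * ν (Y₂ ⁻¹' {s₂}) =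
          ν (Y₁ ⁻¹' {s₁} ∩ Y₂ ⁻¹' {s₂}) * ν (Y₃ ⁻¹' {s₃} ∩ Y₂ ⁻¹' {s₂})) ∧
      IdentDistribFin ν μ (fun ω => (Y₁ ω, Y₂ ω)) (fun ω => (X₁ ω, X₂ ω)) ∧
      IdentDistribFin ν μ' (fun ω => (Y₂ ω, Y₃ ω)) (fun ω => (X₂' ω, X₃ ω)) := by
  obtain ⟨Ω'', _, ν, hν, Y₁, Y₂, Y₃, hindep, h₁₂, h₂₃⟩ := stmt5_general.{0} μ μ' X₁ X₂ X₂' X₃ h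
  exact ⟨Ω'', _, ν, hν, Y₁, Y₂, Y₃, fun s₁ s₂ s₃ _ => hindep {s₁} s₂ {s₃},
    identDistribFin_prodMk_iff.2 fun s₁ s₂ => h₁₂ {s₁} s₂,
    identDistribFin_prodMk_iff.2 fun s₂ s₃ => h₂₃ s₂ {s₃}⟩
end
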